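/- arXiv:1401.6090 — 2 statements merged into one kernel-verified Lean document; each statement's English description precedes it below -/
import Mathlib

section
/- Let n be a positive integer and let h : (0,∞) → (0,∞) be matrix monotone of order n, meaning that for all positive definite Hermitian A₁, A₂ ∈ Mₙ(ℂ) with A₁ ≤ A₂ one has h(A₁) ≤ h(A₂). Then for every positive definite Hermitian A ∈ Mₙ(ℂ) and every T ∈ Mₙ(ℂ), the conditions TᴴT ≤ I and TᴴAT ≤ A imply Tᴴh(A)T ≤ h(A). -/
/-!
The inclusion `P'_n ⊆ C_n` is proved here by a route that uses neither Hansen's inequality nor any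
regularity of `h`.

In an eigenbasis of `A` the claim, tested on a vector `x`, reads `∑ cᵢ h(λᵢ) ≥ 0` with
`cᵢ = |yᵢ|² - |zᵢ|²`, where `y` and `z` are the coordinates of `x` and `T x`. The hypotheses
`Tᴴ T ≤ 1` and `Tᴴ A T ≤ A` give this inequality for every function `λ / (λ + s)` with `s ≥ 0`,
because `λ / (λ + s) · |w|²` is the minimum of `s λ |a|² + |b|²` over `s a + b = w`
(`resolvent_interpolation`).

Let `S` be the set of the `k ≤ n` distinct eigenvalues. Clearing denominators in
`∑ c_x x / (x + s)` and putting `t = -s` gives a polynomial `P` of degree less than `k` which is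
nonnegative for `t < 0`, and `∑ c_x h(x)` is, up to the sign `(-1)^(k-1)`, the divided difference
of `P h / x` over `S`. Such a `P` is a sum of terms
`q²` and `-X r²` of degree less than `k` (`functional_nonneg` is the dual form of this), so only
the divided differences of `q² h / x` and of `r² h` remain.

Their signs come from matrix monotonicity. Over `2m` nodes with `m ≤ n` the divided difference of
`q² h` is nonnegative for `deg q < m` (`sum_even_nonneg`): the nodes of positive and of negative
barycentric weight give two Gram forms on the polynomials of degree less than `m`; the forms
coincide, and the corresponding multiplication-by-`x` forms differ by a form of rank one with a
positive coefficient, so monotonicity compares the corresponding forms for `h`. For the other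
parities one adds a node: close to `0`, where its term is discarded because `h > 0`, or far away,
where the polynomial is made to vanish (`square_nonneg`, `neg_mul_square_nonneg`).
-/

open Matrix MeasureTheory
open scoped ComplexOrder

/-- Loewner order on complex `n × n` matrices: `LoewnerLE A B` iff `B - A` is
positive semidefinite (i.e. `A ≤ B`). -/
def LoewnerLE {n : ℕ} (A B : Matrix (Fin n) (Fin n) ℂ) : Prop := (B - A).PosSemidef

/-- Functional calculus for Hermitian matrices: apply `h : ℝ → ℝ` to each eigenvalue
in a spectral decomposition of `A` (junk value `0` for non-Hermitian input). -/
noncomputable def matFunCalc {n : ℕ} (h : ℝ → ℝ) (A : Matrix (Fin n) (Fin n) ℂ) :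
    Matrix (Fin n) (Fin n) ℂ :=
  if hA : A.IsHermitian then
    (hA.eigenvectorUnitary : Matrix (Fin n) (Fin n) ℂ) *
      diagonal (fun i => (h (hA.eigenvalues i) : ℂ)) *
      star (hA.eigenvectorUnitary : Matrix (Fin n) (Fin n) ℂ)
  else 0

/-! ### Matrix monotonicity in Gram form -/

/-- The functional calculus may be computed from any unitary diagonalization, not only from the
chosen eigenvector basis. -/
lemma matFunCalc_conj {n : ℕ} (h : ℝ → ℝ) (U : Matrix (Fin n) (Fin n) ℂ) (d : Fin n → ℝ)
    (hU : Uᴴ * U = 1) :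
    matFunCalc h (Uᴴ * diagonal (fun i => (d i : ℂ)) * U) =
      Uᴴ * diagonal (fun i => (h (d i) : ℂ)) * U := by
  have hU' : U * Uᴴ = 1 := mul_eq_one_comm.mp hU
  have hA : (Uᴴ * diagonal (fun i => (d i : ℂ)) * U).IsHermitian :=
    isHermitian_conjTranspose_mul_mul _
      (by simp [IsHermitian, diagonal_conjTranspose, Pi.star_def])
  rw [matFunCalc, dif_pos hA]
  set V : Matrix (Fin n) (Fin n) ℂ := (hA.eigenvectorUnitary : Matrix (Fin n) (Fin n) ℂ) with hV
  have hV1 : star V * V = 1 := Unitary.coe_star_mul_self _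
  have hV2 : V * star V = 1 := Unitary.coe_mul_star_self _
  have hspec : Uᴴ * diagonal (fun i => (d i : ℂ)) * U =
      V * diagonal (fun i => (hA.eigenvalues i : ℂ)) * star V := by
    have := hA.spectral_theorem
    rw [Unitary.conjStarAlgAut_apply] at this
    exact this
  have hW : (U * V) * diagonal (fun i => (hA.eigenvalues i : ℂ)) =
      diagonal (fun i => (d i : ℂ)) * (U * V) := by
    calc (U * V) * diagonal (fun i => (hA.eigenvalues i : ℂ))
        = U * (V * diagonal (fun i => (hA.eigenvalues i : ℂ)) * star V) * V := by
          simp only [Matrix.mul_assoc, hV1, Matrix.mul_one]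
      _ = U * (Uᴴ * diagonal (fun i => (d i : ℂ)) * U) * V := congrArg (fun Z => U * Z * V) hspec.symm
      _ = diagonal (fun i => (d i : ℂ)) * (U * V) := by
          simp only [← Matrix.mul_assoc, hU', Matrix.one_mul]
  -- entrywise, an intertwiner of two diagonal matrices only links equal diagonal entries
  have hWh : (U * V) * diagonal (fun i => (h (hA.eigenvalues i) : ℂ)) =
      diagonal (fun i => (h (d i) : ℂ)) * (U * V) := by
    ext i j
    have hij := congrFun (congrFun hW i) j
    rw [mul_diagonal, diagonal_mul] at hij ⊢
    by_cases h0 : (U * V) i j = 0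
    · simp [h0]
    · rw [mul_comm] at hij
      have := mul_right_cancel₀ h0 hij
      rw [Complex.ofReal_injective this, mul_comm]
  calc V * diagonal (fun i => (h (hA.eigenvalues i) : ℂ)) * star V
      = Uᴴ * ((U * V) * diagonal (fun i => (h (hA.eigenvalues i) : ℂ))) * star V := by
        simp only [← Matrix.mul_assoc, hU, Matrix.one_mul]
    _ = Uᴴ * diagonal (fun i => (h (d i) : ℂ)) * U := by
        rw [hWh]; simp only [Matrix.mul_assoc, hV2, Matrix.mul_one]

lemma posDef_conj_diagonal {n : ℕ} (U : Matrix (Fin n) (Fin n) ℂ) (d : Fin n → ℝ)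
    (hU : Uᴴ * U = 1) (hd : ∀ i, 0 < d i) :
    (Uᴴ * diagonal (fun i => (d i : ℂ)) * U).PosDef := by
  refine PosDef.conjTranspose_mul_mul_same (PosDef.diagonal fun i => ?_) ?_
  · exact_mod_cast hd i
  · intro x y hxy
    have := congrArg (fun z => Uᴴ *ᵥ z) hxy
    simpa [mulVec_mulVec, hU] using this

/-- Matrix monotonicity of order `n`, read on two quadratic forms `Yᴴ diag(β) Y ≥ Xᴴ diag(α) X` that
are given in bases with the same Gram matrix. -/
lemma gram_monotone_full {n : ℕ} {h : ℝ → ℝ}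
    (hmono : ∀ A₁ A₂ : Matrix (Fin n) (Fin n) ℂ, A₁.PosDef → A₂.PosDef →
      LoewnerLE A₁ A₂ → LoewnerLE (matFunCalc h A₁) (matFunCalc h A₂))
    (α β : Fin n → ℝ) (hα : ∀ i, 0 < α i) (hβ : ∀ i, 0 < β i)
    (X Y : Matrix (Fin n) (Fin n) ℂ) (hX : IsUnit X.det) (hXY : Xᴴ * X = Yᴴ * Y)
    (hle : (Yᴴ * diagonal (fun i => (β i : ℂ)) * Y -
      Xᴴ * diagonal (fun i => (α i : ℂ)) * X).PosSemidef) :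
    (Yᴴ * diagonal (fun i => (h (β i) : ℂ)) * Y -
      Xᴴ * diagonal (fun i => (h (α i) : ℂ)) * X).PosSemidef := by
  have hX1 : X * X⁻¹ = 1 := mul_nonsing_inv X hX
  have hX2 : X⁻¹ * X = 1 := nonsing_inv_mul X hX
  have hX3 : X⁻¹ᴴ * Xᴴ = 1 := by rw [← conjTranspose_mul, hX1, conjTranspose_one]
  -- equal Gram matrices make the change of basis unitary
  set U := Y * X⁻¹ with hUdef
  have hU : Uᴴ * U = 1 := by
    calc Uᴴ * U = X⁻¹ᴴ * (Yᴴ * Y) * X⁻¹ := by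
          simp only [hUdef, conjTranspose_mul, Matrix.mul_assoc]
      _ = (X⁻¹ᴴ * Xᴴ) * (X * X⁻¹) := by rw [← hXY]; simp only [Matrix.mul_assoc]
      _ = 1 := by rw [hX3, hX1, Matrix.one_mul]
  have hUX : U * X = Y := by rw [hUdef, Matrix.mul_assoc, hX2, Matrix.mul_one]
  have h1 : ((1 : Matrix (Fin n) (Fin n) ℂ))ᴴ * 1 = 1 := by simp
  have key := hmono _ _ (posDef_conj_diagonal 1 α h1 hα) (posDef_conj_diagonal U β hU hβ) (by
    have := hle.conjTranspose_mul_mul_same X⁻¹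
    rw [LoewnerLE]
    convert this using 1
    simp only [hUdef, conjTranspose_mul, Matrix.mul_sub, Matrix.sub_mul, conjTranspose_one,
      Matrix.one_mul, Matrix.mul_one, Matrix.mul_assoc, hX1]
    rw [← Matrix.mul_assoc X⁻¹ᴴ Xᴴ, hX3, Matrix.one_mul])
  rw [LoewnerLE, matFunCalc_conj h _ _ hU, matFunCalc_conj h _ _ h1] at key
  convert key.conjTranspose_mul_mul_same X using 1
  rw [← hUX]
  simp only [conjTranspose_mul, Matrix.mul_sub, Matrix.sub_mul, conjTranspose_one,
      Matrix.one_mul, Matrix.mul_one, Matrix.mul_assoc]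

/-- The same for matrices of any smaller size `m ≤ n`: pad both sides by an identity block. -/
lemma gram_monotone {n : ℕ} {h : ℝ → ℝ}
    (hmono : ∀ A₁ A₂ : Matrix (Fin n) (Fin n) ℂ, A₁.PosDef → A₂.PosDef →
      LoewnerLE A₁ A₂ → LoewnerLE (matFunCalc h A₁) (matFunCalc h A₂))
    {m : ℕ} (hm : m ≤ n)
    (α β : Fin m → ℝ) (hα : ∀ i, 0 < α i) (hβ : ∀ i, 0 < β i)
    (X Y : Matrix (Fin m) (Fin m) ℂ) (hX : IsUnit X.det) (hXY : Xᴴ * X = Yᴴ * Y)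
    (hle : (Yᴴ * diagonal (fun i => (β i : ℂ)) * Y -
      Xᴴ * diagonal (fun i => (α i : ℂ)) * X).PosSemidef) :
    (Yᴴ * diagonal (fun i => (h (β i) : ℂ)) * Y -
      Xᴴ * diagonal (fun i => (h (α i) : ℂ)) * X).PosSemidef := by
  obtain ⟨p, rfl⟩ := Nat.exists_eq_add_of_le hm
  let e : Fin (m + p) ≃ Fin m ⊕ Fin p := finSumFinEquiv.symm
  let pad : Matrix (Fin m) (Fin m) ℂ → Matrix (Fin (m + p)) (Fin (m + p)) ℂ :=
    fun Z => (fromBlocks Z 0 0 (1 : Matrix (Fin p) (Fin p) ℂ)).submatrix e e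
  let ext1 : (Fin m → ℝ) → Fin (m + p) → ℝ := fun a => Sum.elim a (fun _ => 1) ∘ e
  have hext : ∀ a : Fin m → ℝ, (∀ i, 0 < a i) → ∀ i, 0 < ext1 a i := by
    intro a ha i
    simp only [ext1, Function.comp]
    rcases e i with j | j
    · exact ha j
    · exact one_pos
  have hdiag : ∀ (g : ℝ → ℝ) (a : Fin m → ℝ),
      diagonal (fun i => (g (ext1 a i) : ℂ)) =
        (fromBlocks (diagonal fun i => (g (a i) : ℂ)) 0 0
          (diagonal fun _ : Fin p => (g 1 : ℂ))).submatrix e e := by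
    intro g a
    rw [fromBlocks_diagonal, submatrix_diagonal_equiv]
    congr 1
    funext i
    simp only [ext1, Function.comp]
    rcases e i with j | j <;> rfl
  have hform : ∀ (g : ℝ → ℝ) (a : Fin m → ℝ) (Z : Matrix (Fin m) (Fin m) ℂ),
      (pad Z)ᴴ * diagonal (fun i => (g (ext1 a i) : ℂ)) * pad Z =
        (fromBlocks (Zᴴ * diagonal (fun i => (g (a i) : ℂ)) * Z) 0 0
          (diagonal fun _ : Fin p => (g 1 : ℂ))).submatrix e e := by
    intro g a Z
    rw [hdiag]
    simp only [pad, conjTranspose_submatrix, submatrix_mul_equiv, fromBlocks_conjTranspose,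
      fromBlocks_multiply]
    simp
  have hsub : ∀ (g : ℝ → ℝ),
      (pad Y)ᴴ * diagonal (fun i => (g (ext1 β i) : ℂ)) * pad Y -
        (pad X)ᴴ * diagonal (fun i => (g (ext1 α i) : ℂ)) * pad X =
      (fromBlocks (Yᴴ * diagonal (fun i => (g (β i) : ℂ)) * Y -
          Xᴴ * diagonal (fun i => (g (α i) : ℂ)) * X) 0 0
          (0 : Matrix (Fin p) (Fin p) ℂ)).submatrix e e := by
    intro g
    rw [hform, hform]
    ext i j
    simp only [Matrix.sub_apply, submatrix_apply]
    rcases e i with i | i <;> rcases e j with j | j <;> simp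
  have key := gram_monotone_full hmono (ext1 α) (ext1 β) (hext α hα) (hext β hβ) (pad X) (pad Y)
    (by simp only [pad, det_submatrix_equiv_self, det_fromBlocks_zero₂₁, det_one, mul_one]
        exact hX)
    (by simp only [pad, conjTranspose_submatrix, submatrix_mul_equiv, fromBlocks_conjTranspose,
          fromBlocks_multiply]
        simp [hXY])
    (by
      have h2 := hsub id
      simp only [id] at h2
      rw [h2]
      refine PosSemidef.submatrix ?_ e
      have := hle.conjTranspose_mul_mul_same
        (fromCols (1 : Matrix (Fin m) (Fin m) ℂ) (0 : Matrix (Fin m) (Fin p) ℂ))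
      convert this using 1
      rw [conjTranspose_fromCols_eq_fromRows_conjTranspose, fromRows_mul,
        fromRows_mul_fromCols]
      simp)
  rw [hsub] at key
  have := key.submatrix (fun i : Fin m => e.symm (Sum.inl i))
  convert this using 1
  ext i j
  simp

/-! ### Divided differences over an even number of nodes -/

/-- The barycentric weight `∏_{y ∈ S, y ≠ x} (x - y)⁻¹` of the node `x`, i.e. the coefficient of
`f x` in the divided difference of `f` over the node set `S`. -/
noncomputable def wt (S : Finset ℝ) (x : ℝ) : ℝ := ∏ y ∈ S.erase x, (x - y)⁻¹

lemma wt_ne_zero (S : Finset ℝ) (x : ℝ) : wt S x ≠ 0 := by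
  refine Finset.prod_ne_zero_iff.mpr fun y hy => inv_ne_zero (sub_ne_zero.mpr ?_)
  exact (Finset.ne_of_mem_erase hy).symm

lemma wt_insert {S : Finset ℝ} {x z : ℝ} (hx : x ∈ S) (hz : z ∉ S) :
    wt (insert z S) x = (x - z)⁻¹ * wt S x := by
  have hzx : z ≠ x := fun e => hz (e ▸ hx)
  rw [wt, Finset.erase_insert_of_ne hzx, Finset.prod_insert fun e => hz (Finset.mem_of_mem_erase e),
    wt]

lemma wt_insert_self {S : Finset ℝ} {z : ℝ} (hz : z ∉ S) :
    wt (insert z S) z = ∏ y ∈ S, (z - y)⁻¹ := by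
  rw [wt, Finset.erase_insert hz]

/-- The divided difference of a polynomial over `S` is its coefficient of degree `#S - 1`. -/
lemma sum_wt_eval (S : Finset ℝ) (P : Polynomial ℝ) (hP : P.natDegree < S.card) :
    ∑ x ∈ S, wt S x * P.eval x = P.coeff (S.card - 1) := by
  have hdeg : P.degree < S.card :=
    lt_of_le_of_lt Polynomial.degree_le_natDegree (by exact_mod_cast hP)
  rw [Lagrange.coeff_eq_sum (s := S) (v := id) Function.injective_id.injOn hdeg]
  refine Finset.sum_congr rfl fun x _ => ?_
  simp [wt, Finset.prod_inv_distrib, div_eq_mul_inv, mul_comm]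

/-- If fewer than `m` weights had the sign of `σ`, the square of the polynomial vanishing at those
nodes would have degree less than `2m - 1`, hence zero divided difference, although all of its
nonzero terms have the same sign. -/
lemma le_card_sign {m : ℕ} {S : Finset ℝ} (hS : S.card = 2 * m) (σ : ℝ) (hσ : σ ≠ 0) :
    m ≤ (S.filter fun x => 0 < σ * wt S x).card := by
  by_contra! hlt
  set R := S.filter fun x => 0 < σ * wt S x with hR
  let p : Polynomial ℝ := ∏ y ∈ R, (Polynomial.X - Polynomial.C y)
  have hpdeg : p.natDegree = R.card := by simp [p]
  have hp0 : ∀ x, p.eval x = 0 → x ∈ R := by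
    intro x hx
    simp only [p, Polynomial.eval_prod, Finset.prod_eq_zero_iff] at hx
    obtain ⟨y, hy, hxy⟩ := hx
    simp only [Polynomial.eval_sub, Polynomial.eval_X, Polynomial.eval_C] at hxy
    rwa [sub_eq_zero.mp hxy]
  have hp1 : ∀ x ∈ R, p.eval x = 0 := by
    intro x hx
    simp only [p, Polynomial.eval_prod]
    exact Finset.prod_eq_zero hx (by simp)
  have hdeg : (p ^ 2).natDegree < S.card - 1 := by
    rw [Polynomial.natDegree_pow]; omega
  have hsum := sum_wt_eval S (p ^ 2) (by omega)
  rw [Polynomial.coeff_eq_zero_of_natDegree_lt hdeg] at hsum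
  have hsum' : ∑ x ∈ S, -(σ * wt S x) * (p.eval x) ^ 2 = 0 := by
    have : ∑ x ∈ S, -(σ * wt S x) * (p.eval x) ^ 2 =
        -σ * ∑ x ∈ S, wt S x * (p ^ 2).eval x := by
      rw [Finset.mul_sum]
      exact Finset.sum_congr rfl fun x _ => by rw [Polynomial.eval_pow]; ring
    rw [this, hsum, mul_zero]
  rw [Finset.sum_eq_zero_iff_of_nonneg] at hsum'
  · have hsub : S ⊆ R := by
      intro x hx
      have := hsum' x hx
      rcases mul_eq_zero.mp this with h1 | h1
      · exact absurd (neg_eq_zero.mp h1) (mul_ne_zero hσ (wt_ne_zero S x))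
      · exact hp0 x (pow_eq_zero_iff two_ne_zero |>.mp h1)
    have := Finset.card_le_card hsub
    omega
  · intro x hx
    by_cases hxR : x ∈ R
    · rw [hp1 x hxR]; simp
    · have : ¬ 0 < σ * wt S x := fun h0 => hxR (Finset.mem_filter.mpr ⟨hx, h0⟩)
      exact mul_nonneg (by linarith) (sq_nonneg _)

/-- Entries of `Zᴴ diag(g) Z` for the scaled Vandermonde matrix `Z = diag(√c) (vᵢ ^ k)`. -/
lemma vandermonde_form {m : ℕ} (c v g : Fin m → ℝ) (hc : ∀ i, 0 < c i) (k l : Fin m) :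
    ((of fun i k : Fin m => ((√(c i) * v i ^ (k : ℕ) : ℝ) : ℂ))ᴴ * diagonal (fun i => (g i : ℂ)) *
      (of fun i k : Fin m => ((√(c i) * v i ^ (k : ℕ) : ℝ) : ℂ))) k l =
      ((∑ i, c i * g i * v i ^ (k + l : ℕ) : ℝ) : ℂ) := by
  rw [mul_apply, Complex.ofReal_sum]
  refine Finset.sum_congr rfl fun i _ => ?_
  rw [mul_diagonal, conjTranspose_apply, of_apply, of_apply, Complex.star_def, Complex.conj_ofReal,
    ← Complex.ofReal_mul, ← Complex.ofReal_mul]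
  congr 1
  have := Real.mul_self_sqrt (hc i).le
  rw [pow_add]
  linear_combination (v i ^ (k : ℕ) * g i * v i ^ (l : ℕ)) * this

lemma vandermonde_isUnit {m : ℕ} (c v : Fin m → ℝ) (hc : ∀ i, 0 < c i)
    (hv : Function.Injective v) :
    IsUnit (of fun i k : Fin m => ((√(c i) * v i ^ (k : ℕ) : ℝ) : ℂ)).det := by
  have : (of fun i k : Fin m => ((√(c i) * v i ^ (k : ℕ) : ℝ) : ℂ)) =
      diagonal (fun i => ((√(c i) : ℝ) : ℂ)) * vandermonde (fun i => (v i : ℂ)) := by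
    ext i k
    simp [diagonal_mul, vandermonde_apply]
  rw [this, det_mul, det_diagonal, isUnit_iff_ne_zero]
  refine mul_ne_zero (Finset.prod_ne_zero_iff.mpr fun i _ => ?_)
    (det_vandermonde_ne_zero_iff.mpr fun i j hij => hv (Complex.ofReal_injective hij))
  exact_mod_cast (Real.sqrt_pos.mpr (hc i)).ne'

/-- The divided difference of `q² h` over `2m` positive nodes is nonnegative when `deg q < m ≤ n`.
Polynomials of degree `< m` carry the two Gram forms `∑ |w(x)| p(x)²` over the nodes of positive and
over those of negative weight; these coincide, while multiplication by `x` yields two forms differing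
by a positive rank-one form, so that monotonicity of `h` applies. -/
lemma sum_even_nonneg {n : ℕ} {h : ℝ → ℝ}
    (hmono : ∀ A₁ A₂ : Matrix (Fin n) (Fin n) ℂ, A₁.PosDef → A₂.PosDef →
      LoewnerLE A₁ A₂ → LoewnerLE (matFunCalc h A₁) (matFunCalc h A₂))
    {m : ℕ} (hm : m ≤ n) {S : Finset ℝ} (hS : S.card = 2 * m) (hpos : ∀ x ∈ S, 0 < x)
    (q : Polynomial ℝ) (hq : q.natDegree < m) :
    0 ≤ ∑ x ∈ S, wt S x * (q.eval x) ^ 2 * h x := by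
  classical
  let Sp := S.filter fun x => 0 < 1 * wt S x
  let Sm := S.filter fun x => 0 < (-1) * wt S x
  have hdisj : Disjoint Sp Sm := by
    refine Finset.disjoint_filter.mpr fun x _ h1 h2 => ?_
    linarith
  have hunion : Sp ∪ Sm = S := by
    refine Finset.Subset.antisymm (Finset.union_subset (Finset.filter_subset _ _)
      (Finset.filter_subset _ _)) fun x hx => ?_
    rcases lt_or_gt_of_ne (wt_ne_zero S x) with h1 | h1
    · exact Finset.mem_union_right _ (Finset.mem_filter.mpr ⟨hx, by linarith⟩)
    · exact Finset.mem_union_left _ (Finset.mem_filter.mpr ⟨hx, by linarith⟩)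
  have hcard : Sp.card + Sm.card = 2 * m := by
    rw [← Finset.card_union_of_disjoint hdisj, hunion, hS]
  have hp : m ≤ Sp.card := le_card_sign hS 1 one_ne_zero
  have hmm : m ≤ Sm.card := le_card_sign hS (-1) (by norm_num)
  have hSp : Sp.card = m := by omega
  have hSm : Sm.card = m := by omega
  let β := Sp.orderEmbOfFin hSp
  let α := Sm.orderEmbOfFin hSm
  have hβS : ∀ i, β i ∈ Sp := Finset.orderEmbOfFin_mem Sp hSp
  have hαS : ∀ i, α i ∈ Sm := Finset.orderEmbOfFin_mem Sm hSm
  have hsum : ∀ f : ℝ → ℝ, ∑ i, f (β i) + ∑ i, f (α i) = ∑ x ∈ S, f x := by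
    intro f
    have e1 : ∑ x ∈ Sp, f x = ∑ i, f (β i) := by
      conv_lhs => rw [← Finset.map_orderEmbOfFin_univ Sp hSp]
      rw [Finset.sum_map]; rfl
    have e2 : ∑ x ∈ Sm, f x = ∑ i, f (α i) := by
      conv_lhs => rw [← Finset.map_orderEmbOfFin_univ Sm hSm]
      rw [Finset.sum_map]; rfl
    rw [← e1, ← e2, ← Finset.sum_union hdisj, hunion]
  have hcβ : ∀ i, 0 < wt S (β i) := fun i => by
    have := (Finset.mem_filter.mp (hβS i)).2; linarith
  have hcα : ∀ i, 0 < - wt S (α i) := fun i => by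
    have := (Finset.mem_filter.mp (hαS i)).2; linarith
  let X : Matrix (Fin m) (Fin m) ℂ :=
    of fun i k : Fin m => ((√(-wt S (α i)) * α i ^ (k : ℕ) : ℝ) : ℂ)
  let Y : Matrix (Fin m) (Fin m) ℂ :=
    of fun i k : Fin m => ((√(wt S (β i)) * β i ^ (k : ℕ) : ℝ) : ℂ)
  have hform : ∀ g : ℝ → ℝ, Yᴴ * diagonal (fun i => (g (β i) : ℂ)) * Y -
      Xᴴ * diagonal (fun i => (g (α i) : ℂ)) * X =
      of fun k l : Fin m => ((∑ x ∈ S, wt S x * g x * x ^ (k + l : ℕ) : ℝ) : ℂ) := by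
    intro g
    ext k l
    rw [Matrix.sub_apply, vandermonde_form _ _ (fun i => g (β i)) hcβ,
      vandermonde_form _ _ (fun i => g (α i)) hcα, of_apply,
      ← hsum (fun x => wt S x * g x * x ^ (k + l : ℕ)), ← Complex.ofReal_sub]
    congr 1
    simp [neg_mul, Finset.sum_neg_distrib]
  have hXY : Xᴴ * X = Yᴴ * Y := by
    have h1 := hform (fun _ => 1)
    simp only [Complex.ofReal_one, diagonal_one, Matrix.mul_one] at h1
    refine (sub_eq_zero.mp (h1.trans ?_)).symm
    ext k l
    have hk := k.2
    have hl := l.2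
    have := sum_wt_eval S (Polynomial.X ^ (k + l : ℕ)) (by rw [Polynomial.natDegree_X_pow]; omega)
    simp only [Polynomial.eval_pow, Polynomial.eval_X, Polynomial.coeff_X_pow] at this
    rw [if_neg (by omega)] at this
    simp only [of_apply, mul_one, this, Complex.ofReal_zero, Matrix.zero_apply]
  have hle : (Yᴴ * diagonal (fun i => (β i : ℂ)) * Y -
      Xᴴ * diagonal (fun i => (α i : ℂ)) * X).PosSemidef := by
    have h1 := hform id
    simp only [id] at h1
    -- the only nonzero entry is the leading one, `k = l = m - 1`, and it equals `1`
    have h2 : (of fun k l : Fin m => ((∑ x ∈ S, wt S x * x * x ^ (k + l : ℕ) : ℝ) : ℂ)) =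
        diagonal (fun k : Fin m => if (k : ℕ) = m - 1 then (1 : ℂ) else 0) := by
      ext k l
      have hk := k.2
      have hl := l.2
      have := sum_wt_eval S (Polynomial.X ^ (k + l + 1 : ℕ))
        (by rw [Polynomial.natDegree_X_pow]; omega)
      simp only [Polynomial.eval_pow, Polynomial.eval_X, Polynomial.coeff_X_pow] at this
      have h3 : ∑ x ∈ S, wt S x * x * x ^ (k + l : ℕ) =
          ∑ x ∈ S, wt S x * x ^ (k + l + 1 : ℕ) :=
        Finset.sum_congr rfl fun x _ => by ring
      rw [of_apply, h3, this]
      by_cases hkl : k = l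
      · subst hkl
        rw [diagonal_apply_eq]
        by_cases hkm : (k : ℕ) = m - 1
        · rw [if_pos hkm, if_pos (by omega)]; simp
        · rw [if_neg hkm, if_neg (by omega)]; simp
      · have : (k : ℕ) ≠ l := fun e => hkl (Fin.ext e)
        rw [diagonal_apply_ne _ hkl, if_neg (by omega)]; simp
    rw [h1, h2]
    refine PosSemidef.diagonal fun k => ?_
    dsimp only [Pi.zero_apply]
    split_ifs
    · exact zero_le_one
    · exact le_rfl
  have key := gram_monotone hmono hm α β
    (fun i => hpos _ (Finset.mem_of_mem_filter _ (hαS i)))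
    (fun i => hpos _ (Finset.mem_of_mem_filter _ (hβS i))) X Y
    (vandermonde_isUnit _ _ hcα α.injective) hXY hle
  rw [hform h] at key
  have hfin := key.dotProduct_mulVec_nonneg (fun k : Fin m => ((q.coeff k : ℝ) : ℂ))
  have heval : ∀ x, q.eval x = ∑ k : Fin m, q.coeff k * x ^ (k : ℕ) := by
    intro x
    rw [Polynomial.eval_eq_sum_range' hq, Finset.sum_range]
  have heq : star (fun k : Fin m => ((q.coeff k : ℝ) : ℂ)) ⬝ᵥ
      ((of fun k l : Fin m => ((∑ x ∈ S, wt S x * h x * x ^ (k + l : ℕ) : ℝ) : ℂ)) *ᵥ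
        fun k : Fin m => ((q.coeff k : ℝ) : ℂ)) =
      ((∑ x ∈ S, wt S x * (q.eval x) ^ 2 * h x : ℝ) : ℂ) := by
    have h1 : ∑ x ∈ S, wt S x * (q.eval x) ^ 2 * h x =
        ∑ k : Fin m, q.coeff k * ∑ l : Fin m,
          (∑ x ∈ S, wt S x * h x * x ^ (k + l : ℕ)) * q.coeff l := by
      simp only [heval, sq, Finset.mul_sum, Finset.sum_mul]
      rw [Finset.sum_comm]
      refine Finset.sum_congr rfl fun k _ => ?_
      rw [Finset.sum_comm]
      refine Finset.sum_congr rfl fun l _ => Finset.sum_congr rfl fun x _ => ?_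
      ring
    rw [h1]
    simp only [dotProduct, mulVec, Pi.star_apply, Complex.star_def, Complex.conj_ofReal, of_apply,
      Complex.ofReal_sum, Complex.ofReal_mul]
  rw [heq] at hfin
  exact_mod_cast hfin

/-! ### Additional nodes at the ends of the half-line -/

/-- Odd number `2m - 1` of nodes: the divided difference of `q² h / x` is nonnegative. An additional
node `ε` is placed to the left of all others; its term has a negative weight and is discarded because
`h > 0`, and then `ε → 0`. -/
lemma sum_odd_nonneg {n : ℕ} {h : ℝ → ℝ} (hh : ∀ x : ℝ, 0 < x → 0 < h x)
    (hmono : ∀ A₁ A₂ : Matrix (Fin n) (Fin n) ℂ, A₁.PosDef → A₂.PosDef →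
      LoewnerLE A₁ A₂ → LoewnerLE (matFunCalc h A₁) (matFunCalc h A₂))
    {m : ℕ} (hm : m ≤ n) {S : Finset ℝ} (hS : S.card + 1 = 2 * m) (hpos : ∀ x ∈ S, 0 < x)
    (q : Polynomial ℝ) (hq : q.natDegree < m) :
    0 ≤ ∑ x ∈ S, wt S x * ((q.eval x) ^ 2 * (h x / x)) := by
  have hev : ∀ᶠ ε in nhdsWithin (0 : ℝ) (Set.Ioi 0),
      0 ≤ ∑ x ∈ S, wt S x * ((q.eval x) ^ 2 * (h x / (x - ε))) := by
    have h1 : ∀ᶠ ε in nhdsWithin (0 : ℝ) (Set.Ioi 0), ∀ x ∈ S, ε < x :=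
      (Filter.eventually_all_finset S).mpr fun x hx =>
        nhdsWithin_le_nhds (eventually_lt_nhds (hpos x hx))
    filter_upwards [h1, self_mem_nhdsWithin] with ε hε hε0
    have hε0 : 0 < ε := hε0
    have hnot : ε ∉ S := fun hmem => lt_irrefl _ (hε ε hmem)
    have key := sum_even_nonneg hmono hm (S := insert ε S)
      (by rw [Finset.card_insert_of_notMem hnot, hS])
      (fun x hx => by
        rcases Finset.mem_insert.mp hx with rfl | hx
        · exact hε0
        · exact hpos x hx) q hq
    rw [Finset.sum_insert hnot, wt_insert_self hnot] at key
    have hneg : ∏ y ∈ S, (ε - y)⁻¹ ≤ 0 := by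
      have : ∏ y ∈ S, (ε - y)⁻¹ = (-1) ^ S.card * ∏ y ∈ S, (y - ε)⁻¹ := by
        rw [← Finset.prod_const, ← Finset.prod_mul_distrib]
        refine Finset.prod_congr rfl fun y _ => ?_
        rw [← neg_sub y ε, inv_neg, neg_one_mul]
      rw [this, Odd.neg_one_pow ⟨m - 1, by omega⟩, neg_one_mul, neg_nonpos]
      exact Finset.prod_nonneg fun y hy => inv_nonneg.mpr (sub_nonneg.mpr (hε y hy).le)
    have hdrop : (∏ y ∈ S, (ε - y)⁻¹) * q.eval ε ^ 2 * h ε ≤ 0 :=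
      mul_nonpos_of_nonpos_of_nonneg (mul_nonpos_of_nonpos_of_nonneg hneg (sq_nonneg _))
        (hh ε hε0).le
    have heq : ∑ x ∈ S, wt S x * ((q.eval x) ^ 2 * (h x / (x - ε))) =
        ∑ x ∈ S, wt (insert ε S) x * q.eval x ^ 2 * h x := by
      refine Finset.sum_congr rfl fun x hx => ?_
      rw [wt_insert hx hnot]
      ring
    rw [heq]
    linarith
  refine ge_of_tendsto (Filter.Tendsto.mono_left ?_ nhdsWithin_le_nhds) hev
  refine tendsto_finsetSum _ fun x hx => ?_
  have hc : ContinuousAt (fun ε : ℝ => wt S x * (q.eval x ^ 2 * (h x / (x - ε)))) 0 := by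
    have : x - 0 ≠ 0 := by simpa using (hpos x hx).ne'
    fun_prop (disch := assumption)
  simpa [ContinuousAt] using hc

lemma nonpos_of_affine_nonneg {a b N₀ : ℝ} (H : ∀ N, N₀ < N → 0 ≤ a - N * b) : b ≤ 0 := by
  by_contra! hb
  have h1 := H (max (N₀ + 1) ((a + 1) / b)) (lt_of_lt_of_le (lt_add_one _) (le_max_left _ _))
  have h2 : a + 1 ≤ max (N₀ + 1) ((a + 1) / b) * b := by
    rw [← div_le_iff₀ hb]; exact le_max_right _ _
  linarith

/-- Removal of an added node `N`: if all sums carrying an extra factor `x - N` are nonnegative for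
large `N`, then the sum itself is nonpositive. -/
lemma sum_nonpos_of_far_node {S : Finset ℝ} (f : ℝ → ℝ)
    (H : ∀ N, (∀ x ∈ S, x < N) → 0 < N → 0 ≤ ∑ x ∈ S, (x - N) * f x) : ∑ x ∈ S, f x ≤ 0 := by
  refine nonpos_of_affine_nonneg (a := ∑ x ∈ S, x * f x) (N₀ := ∑ x ∈ S, |x|) fun N hN => ?_
  have h0 : (0 : ℝ) ≤ ∑ x ∈ S, |x| := Finset.sum_nonneg fun x _ => abs_nonneg x
  have := H N (fun x hx => lt_of_le_of_lt ((le_abs_self x).trans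
    (Finset.single_le_sum (f := fun x => |x|) (fun y _ => abs_nonneg y) hx)) hN) (by linarith)
  rw [Finset.mul_sum, ← Finset.sum_sub_distrib]
  simpa only [sub_mul] using this

lemma natDegree_mul_X_sub_C_le (q : Polynomial ℝ) (N : ℝ) :
    (q * (Polynomial.X - Polynomial.C N)).natDegree ≤ q.natDegree + 1 :=
  Polynomial.natDegree_mul_le.trans (by rw [Polynomial.natDegree_X_sub_C])

/-- The signed divided difference `(-1)^(k-1) [q² h / x]` over any `k ≤ n` nodes is nonnegative when
`2 deg q ≤ k - 1`. For even `k` a far node `N` is added and `q` is multiplied by `x - N`, so that no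
value of `h` at `N` enters. -/
lemma square_nonneg {n : ℕ} {h : ℝ → ℝ} (hh : ∀ x : ℝ, 0 < x → 0 < h x)
    (hmono : ∀ A₁ A₂ : Matrix (Fin n) (Fin n) ℂ, A₁.PosDef → A₂.PosDef →
      LoewnerLE A₁ A₂ → LoewnerLE (matFunCalc h A₁) (matFunCalc h A₂))
    {S : Finset ℝ} (hS : S.card ≤ n) (hpos : ∀ x ∈ S, 0 < x)
    (q : Polynomial ℝ) (hq : 2 * q.natDegree + 1 ≤ S.card) :
    0 ≤ (-1) ^ (S.card - 1) * ∑ x ∈ S, wt S x * ((q.eval x) ^ 2 * (h x / x)) := by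
  rcases Nat.even_or_odd' S.card with ⟨m, hm | hm⟩
  · rw [Odd.neg_one_pow ⟨m - 1, by omega⟩, neg_one_mul, neg_nonneg]
    refine sum_nonpos_of_far_node _ fun N hN hN0 => ?_
    have hnot : N ∉ S := fun hmem => lt_irrefl _ (hN N hmem)
    have key := sum_odd_nonneg hh hmono (m := m + 1) (by omega) (S := insert N S)
      (by rw [Finset.card_insert_of_notMem hnot]; omega)
      (fun x hx => by
        rcases Finset.mem_insert.mp hx with rfl | hx
        · exact hN0
        · exact hpos x hx) (q * (Polynomial.X - Polynomial.C N))
      (lt_of_le_of_lt (natDegree_mul_X_sub_C_le q N) (by omega))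
    rw [Finset.sum_insert hnot] at key
    simp only [Polynomial.eval_mul, Polynomial.eval_sub, Polynomial.eval_X, Polynomial.eval_C,
      sub_self, mul_zero, ne_eq, OfNat.ofNat_ne_zero, not_false_eq_true, zero_pow, zero_mul,
      zero_add] at key
    refine key.trans_eq (Finset.sum_congr rfl fun x hx => ?_)
    have : x - N ≠ 0 := sub_ne_zero.mpr (hN x hx).ne
    rw [wt_insert hx hnot]
    field_simp
  · rw [Even.neg_one_pow ⟨m, by omega⟩, one_mul]
    exact sum_odd_nonneg hh hmono (m := m + 1) (by omega) (by omega) hpos q (by omega)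

/-- Companion of `square_nonneg` for `-x r²` in place of `q²`; here `2 deg r + 1 ≤ k - 1`. -/
lemma neg_mul_square_nonneg {n : ℕ} {h : ℝ → ℝ}
    (hmono : ∀ A₁ A₂ : Matrix (Fin n) (Fin n) ℂ, A₁.PosDef → A₂.PosDef →
      LoewnerLE A₁ A₂ → LoewnerLE (matFunCalc h A₁) (matFunCalc h A₂))
    {S : Finset ℝ} (hS : S.card ≤ n) (hpos : ∀ x ∈ S, 0 < x)
    (r : Polynomial ℝ) (hr : 2 * r.natDegree + 2 ≤ S.card) :
    0 ≤ (-1) ^ (S.card - 1) * ∑ x ∈ S, wt S x * (-x * (r.eval x) ^ 2 * (h x / x)) := by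
  have hx : ∑ x ∈ S, wt S x * (-x * (r.eval x) ^ 2 * (h x / x)) =
      - ∑ x ∈ S, wt S x * r.eval x ^ 2 * h x := by
    rw [← Finset.sum_neg_distrib]
    refine Finset.sum_congr rfl fun x hx => ?_
    have := (hpos x hx).ne'
    field_simp
  rw [hx]
  rcases Nat.even_or_odd' S.card with ⟨m, hm | hm⟩
  · rw [Odd.neg_one_pow ⟨m - 1, by omega⟩, neg_mul_neg, one_mul]
    exact sum_even_nonneg hmono (m := m) (by omega) hm hpos r (by omega)
  · rw [Even.neg_one_pow ⟨m, by omega⟩, one_mul, neg_nonneg]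
    refine sum_nonpos_of_far_node _ fun N hN hN0 => ?_
    have hnot : N ∉ S := fun hmem => lt_irrefl _ (hN N hmem)
    have key := sum_even_nonneg hmono (m := m + 1) (by omega) (S := insert N S)
      (by rw [Finset.card_insert_of_notMem hnot]; omega)
      (fun x hx => by
        rcases Finset.mem_insert.mp hx with rfl | hx
        · exact hN0
        · exact hpos x hx) (r * (Polynomial.X - Polynomial.C N))
      (lt_of_le_of_lt (natDegree_mul_X_sub_C_le r N) (by omega))
    rw [Finset.sum_insert hnot] at key
    simp only [Polynomial.eval_mul, Polynomial.eval_sub, Polynomial.eval_X, Polynomial.eval_C,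
      sub_self, mul_zero, ne_eq, OfNat.ofNat_ne_zero, not_false_eq_true, zero_pow, zero_mul,
      zero_add] at key
    refine key.trans_eq (Finset.sum_congr rfl fun x hx => ?_)
    have : x - N ≠ 0 := sub_ne_zero.mpr (hN x hx).ne
    rw [wt_insert hx hnot]
    field_simp

/-! ### Polynomials nonnegative on a half-line -/

section HalfLine

open Polynomial

/-- A real polynomial that is nonnegative on `(-∞, 0)` and has degree `≥ 1` splits off a factor
`a - X` with `a ≥ 0` or a factor `(X - u)² + v²`; the cofactor is again nonnegative on `(-∞, 0)`. -/
lemma exists_factor (P : ℝ[X]) (hdeg : P.natDegree ≠ 0) (hP : ∀ x < 0, 0 ≤ P.eval x) :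
    (∃ (a : ℝ) (Q : ℝ[X]), 0 ≤ a ∧ P = (C a - X) * Q ∧ ∀ x < 0, 0 ≤ Q.eval x) ∨
    (∃ (u v : ℝ) (Q : ℝ[X]), P = ((X - C u) ^ 2 + C v ^ 2) * Q ∧ ∀ x < 0, 0 ≤ Q.eval x) := by
  obtain ⟨z, hz⟩ := Complex.exists_root (f := P.map (algebraMap ℝ ℂ)) (by
    rw [degree_map]; exact natDegree_pos_iff_degree_pos.mp (Nat.pos_of_ne_zero hdeg))
  have hz' : aeval z P = 0 := by rwa [IsRoot.def, eval_map_algebraMap] at hz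
  by_cases him : z.im = 0
  · have hroot : P.IsRoot z.re := by
      have hzr : z = (algebraMap ℝ ℂ) z.re := Complex.ext rfl (by simpa using him)
      rw [hzr, aeval_algebraMap_apply] at hz'
      simpa using hz'
    rcases le_or_gt 0 z.re with ha | ha
    · left
      obtain ⟨Q, hQ⟩ := dvd_iff_isRoot.mpr hroot
      refine ⟨z.re, -Q, ha, by rw [hQ]; ring, fun x hx => ?_⟩
      have h1 := hP x hx
      rw [hQ, eval_mul, eval_sub, eval_X, eval_C] at h1
      rw [eval_neg]
      by_contra! hlt
      nlinarith
    · right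
      -- an interior zero of a nonnegative function is a minimum, hence a double root
      have hP0 : P ≠ 0 := fun h0 => hdeg (by rw [h0, natDegree_zero])
      have hmin : IsLocalMin (fun x => P.eval x) z.re := by
        filter_upwards [eventually_lt_nhds ha] with x hx
        rw [hroot]
        exact hP x hx
      have hder : (derivative P).IsRoot z.re := by
        have := hmin.deriv_eq_zero
        rwa [Polynomial.deriv] at this
      have hmult := (one_lt_rootMultiplicity_iff_isRoot hP0).mpr ⟨hroot, hder⟩
      obtain ⟨Q, hQ⟩ := (le_rootMultiplicity_iff hP0).mp (Nat.succ_le_of_lt hmult)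
      have hne : ∀ x < 0, x ≠ z.re → 0 ≤ Q.eval x := by
        intro x hx hxa
        have h1 := hP x hx
        rw [hQ, eval_mul, eval_pow, eval_sub, eval_X, eval_C] at h1
        have h2 : 0 < (x - z.re) ^ 2 := by
          have := sub_ne_zero.mpr hxa
          positivity
        exact nonneg_of_mul_nonneg_right h1 h2
      refine ⟨z.re, 0, Q, by rw [hQ]; simp, fun x hx => ?_⟩
      rcases eq_or_ne x z.re with rfl | hxa
      · refine ge_of_tendsto (f := fun y => Q.eval y) (x := nhdsWithin z.re {z.re}ᶜ)
          (Q.continuous.continuousAt.tendsto.mono_left nhdsWithin_le_nhds) ?_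
        filter_upwards [nhdsWithin_le_nhds (eventually_lt_nhds ha), self_mem_nhdsWithin] with y hy hya
        exact hne y hy hya
      · exact hne x hx hxa
  · right
    obtain ⟨Q, hQ⟩ := P.quadratic_dvd_of_aeval_eq_zero_im_ne_zero hz' him
    have hfac : (X ^ 2 - C (2 * z.re) * X + C (‖z‖ ^ 2) : ℝ[X]) =
        (X - C z.re) ^ 2 + C z.im ^ 2 := by
      rw [Complex.sq_norm, Complex.normSq_apply]
      simp only [map_mul, map_add, map_ofNat]
      ring
    rw [hfac] at hQ
    refine ⟨z.re, z.im, Q, hQ, fun x hx => ?_⟩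
    have h1 := hP x hx
    rw [hQ] at h1
    simp only [eval_mul, eval_add, eval_pow, eval_sub, eval_X, eval_C] at h1
    exact nonneg_of_mul_nonneg_right h1 (by positivity)

/-- Dual form of the representation `∑ q² - X ∑ r²` of polynomials nonnegative on the negative
half-line, with degree control: a linear functional that is nonnegative on the squares `q²` and on the
products `-X r²` of degree at most `d` is nonnegative on all such polynomials of degree at most `d`.
Each factor of `P` is absorbed into the functional. -/
lemma functional_nonneg (d : ℕ) : ∀ (P : ℝ[X]) (L : ℝ[X] →ₗ[ℝ] ℝ), P.natDegree ≤ d →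
    (∀ x < 0, 0 ≤ P.eval x) → (∀ q : ℝ[X], 2 * q.natDegree ≤ d → 0 ≤ L (q ^ 2)) →
    (∀ r : ℝ[X], 2 * r.natDegree + 1 ≤ d → 0 ≤ L (-X * r ^ 2)) → 0 ≤ L P := by
  induction d using Nat.strong_induction_on with
  | _ d ih =>
  intro P L hd hP hL1 hL2
  by_cases hdeg : P.natDegree = 0
  · obtain ⟨c, rfl⟩ := natDegree_eq_zero.mp hdeg
    have hc : 0 ≤ c := by simpa using hP (-1) (by norm_num)
    have := hL1 (C (√c)) (by simp)
    rwa [← C_pow, Real.sq_sqrt hc] at this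
  have hP0 : P ≠ 0 := fun h0 => hdeg (by rw [h0, natDegree_zero])
  rcases exists_factor P hdeg hP with ⟨a, Q, ha, rfl, hQ⟩ | ⟨u, v, Q, rfl, hQ⟩
  · have hQ0 : Q ≠ 0 := right_ne_zero_of_mul hP0
    have hdegQ : Q.natDegree ≤ d - 1 := by
      rw [natDegree_mul (left_ne_zero_of_mul hP0) hQ0] at hd
      have : (C a - X : ℝ[X]).natDegree = 1 := by
        rw [← neg_sub, natDegree_neg, natDegree_X_sub_C]
      omega
    have h1 := ih (d - 1) (by omega) Q (L ∘ₗ LinearMap.mulLeft ℝ (C a - X)) hdegQ hQ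
      (fun q hq => ?_) (fun r hr => ?_)
    · simpa using h1
    · have e : (C a - X) * q ^ 2 = a • q ^ 2 + -X * q ^ 2 := by rw [smul_eq_C_mul]; ring
      rw [LinearMap.comp_apply, LinearMap.mulLeft_apply, e, map_add, map_smul]
      exact add_nonneg (mul_nonneg ha (hL1 q (by omega))) (hL2 q (by omega))
    · have e : (C a - X) * (-X * r ^ 2) = a • (-X * r ^ 2) + (X * r) ^ 2 := by
        rw [smul_eq_C_mul]; ring
      have hX : (X * r).natDegree ≤ 1 + r.natDegree :=
        natDegree_mul_le.trans (by rw [natDegree_X])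
      rw [LinearMap.comp_apply, LinearMap.mulLeft_apply, e, map_add, map_smul]
      exact add_nonneg (mul_nonneg ha (hL2 r (by omega))) (hL1 (X * r) (by omega))
  · have hQ0 : Q ≠ 0 := right_ne_zero_of_mul hP0
    have hd2 : ((X - C u) ^ 2 + C v ^ 2 : ℝ[X]).natDegree = 2 := by
      rw [← C_pow, natDegree_add_C, natDegree_pow, natDegree_X_sub_C]
    rw [natDegree_mul (left_ne_zero_of_mul hP0) hQ0, hd2] at hd
    have hX : ∀ r : ℝ[X], ((X - C u) * r).natDegree ≤ 1 + r.natDegree := fun r =>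
      natDegree_mul_le.trans (by rw [natDegree_X_sub_C])
    have hC : ∀ r : ℝ[X], (C v * r).natDegree ≤ r.natDegree := fun r => natDegree_C_mul_le v r
    have h1 := ih (d - 2) (by omega) Q (L ∘ₗ LinearMap.mulLeft ℝ ((X - C u) ^ 2 + C v ^ 2))
      (by omega) hQ (fun q hq => ?_) (fun r hr => ?_)
    · simpa using h1
    · have e : ((X - C u) ^ 2 + C v ^ 2) * q ^ 2 = ((X - C u) * q) ^ 2 + (C v * q) ^ 2 := by ring
      have := hX q
      have := hC q
      rw [LinearMap.comp_apply, LinearMap.mulLeft_apply, e, map_add]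
      exact add_nonneg (hL1 _ (by omega)) (hL1 _ (by omega))
    · have e : ((X - C u) ^ 2 + C v ^ 2) * (-X * r ^ 2) =
          -X * ((X - C u) * r) ^ 2 + -X * (C v * r) ^ 2 := by ring
      have := hX r
      have := hC r
      rw [LinearMap.comp_apply, LinearMap.mulLeft_apply, e, map_add]
      exact add_nonneg (hL2 _ (by omega)) (hL2 _ (by omega))

/-- A finitely supported inequality on at most `n` points that holds for all the functions
`x / (x + s)`, `s ≥ 0`, holds for `h`. -/
lemma sum_nonneg_of_resolvents {n : ℕ} {h : ℝ → ℝ} (hh : ∀ x : ℝ, 0 < x → 0 < h x)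
    (hmono : ∀ A₁ A₂ : Matrix (Fin n) (Fin n) ℂ, A₁.PosDef → A₂.PosDef →
      LoewnerLE A₁ A₂ → LoewnerLE (matFunCalc h A₁) (matFunCalc h A₂))
    {S : Finset ℝ} (hS : S.card ≤ n) (hpos : ∀ x ∈ S, 0 < x) (c : ℝ → ℝ)
    (hc : ∀ s, 0 ≤ s → 0 ≤ ∑ x ∈ S, c x * (x / (x + s))) :
    0 ≤ ∑ x ∈ S, c x * h x := by
  rcases S.eq_empty_or_nonempty with rfl | hne
  · simp
  have hcard : 0 < S.card := hne.card_pos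
  -- numerator of `∑ c(y) y / (y - x)` over the common denominator `∏ (y - x)`
  let P : ℝ[X] := ∑ x ∈ S, C (c x * x) * ∏ y ∈ S.erase x, (C y - X)
  let L : ℝ[X] →ₗ[ℝ] ℝ := ∑ x ∈ S, ((-1) ^ (S.card - 1) * wt S x * (h x / x)) • leval x
  have hL : ∀ Q : ℝ[X], L Q =
      (-1) ^ (S.card - 1) * ∑ x ∈ S, wt S x * (Q.eval x * (h x / x)) := by
    intro Q
    simp only [L, LinearMap.sum_apply, LinearMap.smul_apply, leval_apply, smul_eq_mul,
      Finset.mul_sum]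
    exact Finset.sum_congr rfl fun x _ => by ring
  have hPdeg : P.natDegree ≤ S.card - 1 := by
    refine natDegree_sum_le_of_forall_le _ _ fun x hx => ?_
    refine (natDegree_C_mul_le _ _).trans ((natDegree_prod_le _ _).trans ?_)
    rw [← Finset.card_erase_of_mem hx]
    refine (Finset.sum_le_card_nsmul _ _ 1 fun y _ => ?_).trans (by simp)
    have : (C y - X : ℝ[X]).natDegree = 1 := by rw [← neg_sub, natDegree_neg, natDegree_X_sub_C]
    exact this.le
  have hPeval : ∀ t, P.eval t = ∑ x ∈ S, c x * x * ∏ y ∈ S.erase x, (y - t) := by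
    intro t
    simp [P, eval_finsetSum, eval_prod]
  have hPnonneg : ∀ t < 0, 0 ≤ P.eval t := by
    intro t ht
    have h1 : P.eval t = (∏ y ∈ S, (y - t)) * ∑ x ∈ S, c x * (x / (x + -t)) := by
      rw [hPeval, Finset.mul_sum]
      refine Finset.sum_congr rfl fun x hx => ?_
      have : x - t ≠ 0 := by have := hpos x hx; linarith
      rw [← Finset.mul_prod_erase S (fun y => y - t) hx, ← sub_eq_add_neg]
      field_simp
    rw [h1]
    refine mul_nonneg (Finset.prod_nonneg fun y hy => ?_) (hc _ (by linarith))
    have := hpos y hy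
    linarith
  have key := functional_nonneg (S.card - 1) P L hPdeg hPnonneg
    (fun q hq => by
      rw [hL]
      simpa using square_nonneg hh hmono hS hpos q (by omega))
    (fun r hr => by
      rw [hL]
      simpa using neg_mul_square_nonneg hmono hS hpos r (by omega))
  rw [hL, Finset.mul_sum] at key
  refine key.trans_eq (Finset.sum_congr rfl fun x hx => ?_)
  have hx0 : x ≠ 0 := (hpos x hx).ne'
  have hPx : P.eval x = c x * x * ∏ y ∈ S.erase x, (y - x) := by
    rw [hPeval]
    refine Finset.sum_eq_single_of_mem x hx fun z _ hzx => ?_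
    have h0 : ∏ y ∈ S.erase z, (y - x) = 0 :=
      Finset.prod_eq_zero (Finset.mem_erase.mpr ⟨hzx.symm, hx⟩) (sub_self x)
    rw [h0, mul_zero]
  have hsign : (-1 : ℝ) ^ (S.card - 1) * wt S x * ∏ y ∈ S.erase x, (y - x) = 1 := by
    rw [← Finset.card_erase_of_mem hx, ← Finset.prod_const, wt, ← Finset.prod_mul_distrib,
      ← Finset.prod_mul_distrib]
    refine Finset.prod_eq_one fun y hy => ?_
    have : x - y ≠ 0 := sub_ne_zero.mpr (Finset.ne_of_mem_erase hy).symm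
    field_simp
    ring
  calc (-1) ^ (S.card - 1) * (wt S x * (P.eval x * (h x / x)))
      = ((-1) ^ (S.card - 1) * wt S x * ∏ y ∈ S.erase x, (y - x)) * (c x * x * (h x / x)) := by
        rw [hPx]; ring
    _ = c x * h x := by rw [hsign]; field_simp

end HalfLine

/-! ### The resolvent functions and the main inequality -/

/-- The Loewner inequality `Tᴴ B T ≤ B` for `B = V diag(g) Vᴴ`, in the coordinates `Vᴴ x`. -/
lemma loewner_iff {n : ℕ} (V T : Matrix (Fin n) (Fin n) ℂ) (g : Fin n → ℝ) :
    LoewnerLE (Tᴴ * (V * diagonal (fun i => (g i : ℂ)) * Vᴴ) * T)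
      (V * diagonal (fun i => (g i : ℂ)) * Vᴴ) ↔
    ∀ x : Fin n → ℂ, ∑ i, g i * ‖(Vᴴ *ᵥ (T *ᵥ x)) i‖ ^ 2 ≤ ∑ i, g i * ‖(Vᴴ *ᵥ x) i‖ ^ 2 := by
  set B := V * diagonal (fun i => (g i : ℂ)) * Vᴴ with hB
  have hBh : B.IsHermitian := by
    have := isHermitian_mul_mul_conjTranspose V (A := diagonal (fun i => (g i : ℂ)))
      (by simp [IsHermitian, diagonal_conjTranspose, Pi.star_def])
    exact this
  have hherm : (B - Tᴴ * B * T).IsHermitian :=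
    hBh.sub (isHermitian_conjTranspose_mul_mul T hBh)
  have hquad : ∀ x, star x ⬝ᵥ (B *ᵥ x) = ((∑ i, g i * ‖(Vᴴ *ᵥ x) i‖ ^ 2 : ℝ) : ℂ) := by
    intro x
    have h1 : star x ⬝ᵥ (B *ᵥ x) =
        star (Vᴴ *ᵥ x) ⬝ᵥ (diagonal (fun i => (g i : ℂ)) *ᵥ (Vᴴ *ᵥ x)) := by
      rw [star_mulVec, conjTranspose_conjTranspose, ← dotProduct_mulVec, mulVec_mulVec,
        mulVec_mulVec, hB, Matrix.mul_assoc]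
    rw [h1, dotProduct, Complex.ofReal_sum]
    refine Finset.sum_congr rfl fun i _ => ?_
    rw [mulVec_diagonal, Pi.star_apply, Complex.star_def, mul_left_comm, Complex.conj_mul']
    push_cast
    rfl
  have hT : ∀ x, star x ⬝ᵥ ((Tᴴ * B * T) *ᵥ x) = star (T *ᵥ x) ⬝ᵥ (B *ᵥ (T *ᵥ x)) := by
    intro x
    rw [star_mulVec, ← dotProduct_mulVec, mulVec_mulVec, mulVec_mulVec, Matrix.mul_assoc]
  rw [LoewnerLE, posSemidef_iff_dotProduct_mulVec]
  refine ⟨fun H x => ?_, fun H => ⟨hherm, fun x => ?_⟩⟩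
  · have := H.2 x
    rw [sub_mulVec, dotProduct_sub, hT, hquad, hquad, sub_nonneg] at this
    exact_mod_cast this
  · rw [sub_mulVec, dotProduct_sub, hT, hquad, hquad, sub_nonneg]
    exact_mod_cast H x

/-- For `B = l / (l + s)` this is the variational upper bound of the parallel sum,
`B |s a + b|² ≤ s l |a|² + |b|²`. -/
lemma resolvent_norm_le {l s : ℝ} (hl : 0 < l) (hs : 0 ≤ s) (a b : ℂ) :
    l / (l + s) * ‖(s : ℂ) * a + b‖ ^ 2 ≤ s * (l * ‖a‖ ^ 2) + ‖b‖ ^ 2 := by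
  have h1 : ‖(s : ℂ) * a + b‖ ≤ s * ‖a‖ + ‖b‖ := by
    refine (norm_add_le _ _).trans ?_
    rw [norm_mul, Complex.norm_real, Real.norm_of_nonneg hs]
  have h2 : ‖(s : ℂ) * a + b‖ ^ 2 ≤ (s * ‖a‖ + ‖b‖) ^ 2 :=
    pow_le_pow_left₀ (norm_nonneg _) h1 2
  have h3 : 0 < l + s := by linarith
  calc l / (l + s) * ‖(s : ℂ) * a + b‖ ^ 2
      ≤ l / (l + s) * (s * ‖a‖ + ‖b‖) ^ 2 := by gcongr
    _ ≤ s * (l * ‖a‖ ^ 2) + ‖b‖ ^ 2 := by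
      rw [div_mul_eq_mul_div, div_le_iff₀ h3]
      nlinarith [mul_nonneg hs (sq_nonneg (l * ‖a‖ - ‖b‖))]

/-- The functions `x / (x + s)` have the interpolation property: split `x = s u + v` optimally for
the parallel sum, and apply the two hypotheses to `u` and to `v`. -/
lemma resolvent_interpolation {n : ℕ} (V T : Matrix (Fin n) (Fin n) ℂ) (hV : Vᴴ * V = 1)
    (l : Fin n → ℝ) (hl : ∀ i, 0 < l i)
    (H1 : ∀ x : Fin n → ℂ, ∑ i, ‖(Vᴴ *ᵥ (T *ᵥ x)) i‖ ^ 2 ≤ ∑ i, ‖(Vᴴ *ᵥ x) i‖ ^ 2)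
    (H2 : ∀ x : Fin n → ℂ, ∑ i, l i * ‖(Vᴴ *ᵥ (T *ᵥ x)) i‖ ^ 2 ≤ ∑ i, l i * ‖(Vᴴ *ᵥ x) i‖ ^ 2)
    (s : ℝ) (hs : 0 ≤ s) (x : Fin n → ℂ) :
    ∑ i, l i / (l i + s) * ‖(Vᴴ *ᵥ (T *ᵥ x)) i‖ ^ 2 ≤
      ∑ i, l i / (l i + s) * ‖(Vᴴ *ᵥ x) i‖ ^ 2 := by
  have hV' : V * Vᴴ = 1 := mul_eq_one_comm.mp hV
  have hls : ∀ i, 0 < l i + s := fun i => by have := hl i; linarith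
  have hlsC : ∀ i, (l i : ℂ) + s ≠ 0 := fun i => by exact_mod_cast (hls i).ne'
  set y := Vᴴ *ᵥ x with hy
  let u : Fin n → ℂ := V *ᵥ fun i => y i / (l i + s)
  let v : Fin n → ℂ := V *ᵥ fun i => l i * y i / (l i + s)
  have hu : ∀ i, (Vᴴ *ᵥ u) i = y i / (l i + s) := by
    intro i; simp only [u, mulVec_mulVec, hV, one_mulVec]
  have hv : ∀ i, (Vᴴ *ᵥ v) i = l i * y i / (l i + s) := by
    intro i; simp only [v, mulVec_mulVec, hV, one_mulVec]
  have hxuv : x = (s : ℂ) • u + v := by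
    have h1 : x = V *ᵥ y := by rw [hy, mulVec_mulVec, hV', one_mulVec]
    have h2 : y = (s : ℂ) • (fun i => y i / (l i + s)) + fun i => l i * y i / (l i + s) := by
      funext i
      have := hlsC i
      simp only [Pi.add_apply, Pi.smul_apply, smul_eq_mul]
      field_simp
      ring
    rw [h1]
    conv_lhs => rw [h2]
    rw [mulVec_add, mulVec_smul]
  have hz : ∀ i, (Vᴴ *ᵥ (T *ᵥ x)) i = s * (Vᴴ *ᵥ (T *ᵥ u)) i + (Vᴴ *ᵥ (T *ᵥ v)) i := by
    intro i
    rw [hxuv, mulVec_add, mulVec_smul, mulVec_add, mulVec_smul]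
    rfl
  calc ∑ i, l i / (l i + s) * ‖(Vᴴ *ᵥ (T *ᵥ x)) i‖ ^ 2
      ≤ ∑ i, (s * (l i * ‖(Vᴴ *ᵥ (T *ᵥ u)) i‖ ^ 2) + ‖(Vᴴ *ᵥ (T *ᵥ v)) i‖ ^ 2) :=
        Finset.sum_le_sum fun i _ => by
          rw [hz]; exact resolvent_norm_le (hl i) hs _ _
    _ = s * ∑ i, l i * ‖(Vᴴ *ᵥ (T *ᵥ u)) i‖ ^ 2 + ∑ i, ‖(Vᴴ *ᵥ (T *ᵥ v)) i‖ ^ 2 := by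
        rw [Finset.sum_add_distrib, Finset.mul_sum]
    _ ≤ s * ∑ i, l i * ‖(Vᴴ *ᵥ u) i‖ ^ 2 + ∑ i, ‖(Vᴴ *ᵥ v) i‖ ^ 2 :=
        add_le_add (mul_le_mul_of_nonneg_left (H2 u) hs) (H1 v)
    _ = ∑ i, l i / (l i + s) * ‖y i‖ ^ 2 := by
        rw [Finset.mul_sum, ← Finset.sum_add_distrib]
        refine Finset.sum_congr rfl fun i _ => ?_
        have h1 : ‖(l i : ℂ) + s‖ = l i + s := by
          rw [← Complex.ofReal_add, Complex.norm_real, Real.norm_of_nonneg (hls i).le]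
        have h2 := (hls i).ne'
        rw [hu, hv, norm_div, norm_div, norm_mul, h1, Complex.norm_real,
          Real.norm_of_nonneg (hl i).le]
        field_simp
        ring

/-- inclusion `P'_n ⊆ C_n`: if `h` is matrix monotone of order `n`,
then `h` is an exact interpolation function for all positive definite matrices of
order `n`. -/
theorem monotone_implies_interpolation (n : ℕ) (hn : 0 < n)
    (h : ℝ → ℝ) (hpos : ∀ x : ℝ, 0 < x → 0 < h x)
    (hmono : ∀ A₁ A₂ : Matrix (Fin n) (Fin n) ℂ, A₁.PosDef → A₂.PosDef →
      LoewnerLE A₁ A₂ → LoewnerLE (matFunCalc h A₁) (matFunCalc h A₂)) :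
    ∀ A : Matrix (Fin n) (Fin n) ℂ, A.PosDef →
      ∀ T : Matrix (Fin n) (Fin n) ℂ,
        LoewnerLE (Tᴴ * T) 1 → LoewnerLE (Tᴴ * A * T) A →
        LoewnerLE (Tᴴ * matFunCalc h A * T) (matFunCalc h A) := by
  intro A hA T hT1 hT2
  set V : Matrix (Fin n) (Fin n) ℂ :=
    (hA.isHermitian.eigenvectorUnitary : Matrix (Fin n) (Fin n) ℂ) with hVdef
  set l := hA.isHermitian.eigenvalues with hldef
  have hV : Vᴴ * V = 1 := Unitary.coe_star_mul_self _
  have hV' : V * Vᴴ = 1 := mul_eq_one_comm.mp hV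
  have hl : ∀ i, 0 < l i := hA.eigenvalues_pos
  have hspec : A = V * diagonal (fun i => (l i : ℂ)) * Vᴴ := by
    have := hA.isHermitian.spectral_theorem
    rw [Unitary.conjStarAlgAut_apply] at this
    exact this
  have hcalc : matFunCalc h A = V * diagonal (fun i => (h (l i) : ℂ)) * Vᴴ := by
    rw [matFunCalc, dif_pos hA.isHermitian]
    rfl
  have H1 : ∀ x : Fin n → ℂ, ∑ i, ‖(Vᴴ *ᵥ (T *ᵥ x)) i‖ ^ 2 ≤ ∑ i, ‖(Vᴴ *ᵥ x) i‖ ^ 2 := by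
    have h1 := (loewner_iff V T (fun _ => 1)).mp (by simpa [hV'] using hT1)
    simpa using h1
  have H2 := (loewner_iff V T l).mp (by rw [← hspec]; exact hT2)
  rw [hcalc, loewner_iff]
  intro x
  -- equal eigenvalues are grouped, so that the sums run over distinct nodes
  let c : ℝ → ℝ := fun t => ∑ i with l i = t, (‖(Vᴴ *ᵥ x) i‖ ^ 2 - ‖(Vᴴ *ᵥ (T *ᵥ x)) i‖ ^ 2)
  have hsum : ∀ g : ℝ → ℝ, ∑ t ∈ Finset.univ.image l, c t * g t =
      ∑ i, g (l i) * ‖(Vᴴ *ᵥ x) i‖ ^ 2 - ∑ i, g (l i) * ‖(Vᴴ *ᵥ (T *ᵥ x)) i‖ ^ 2 := by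
    intro g
    rw [← Finset.sum_sub_distrib, ← Finset.sum_fiberwise_of_maps_to (g := l)
      (t := Finset.univ.image l) (fun i hi => Finset.mem_image_of_mem l hi)]
    refine Finset.sum_congr rfl fun t _ => ?_
    rw [Finset.sum_mul]
    refine Finset.sum_congr rfl fun i hi => ?_
    rw [(Finset.mem_filter.mp hi).2]
    ring
  have key := sum_nonneg_of_resolvents hpos hmono (S := Finset.univ.image l)
    (Finset.card_image_le.trans (by simp))
    (fun t ht => by
      obtain ⟨i, _, rfl⟩ := Finset.mem_image.mp ht
      exact hl i) c
    (fun s hs => by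
      rw [hsum (fun t => t / (t + s)), sub_nonneg]
      exact resolvent_interpolation V T hV l hl H1 H2 s hs x)
  rw [hsum, sub_nonneg] at key
  exact key
end

section
/- A function h : (0,∞) → (0,∞) is matrix monotone of every order n (that is, for every n and all positive definite Hermitian A₁, A₂ ∈ Mₙ(ℂ) with A₁ ≤ A₂ one has h(A₁) ≤ h(A₂)) if and only if h is of class P′, i.e., there exist a constant c ≥ 0 and a finite positive Borel measure ρ on [0,∞) such that h(λ) = c + ∫_{[0,∞)} (1+t)λ/(1+tλ) dρ(t) for all λ > 0. -/
/-!
Necessity. Let `h` be matrix monotone of every order. A rank one perturbation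
`diagonal a ≤ diagonal a + u uᵀ` can be given any spectrum `b` interlacing with `a`; its
eigenvectors are the columns of a normalized Cauchy matrix. Testing monotonicity on a suitable
vector shows that the divided difference of `p² h` at any `2n` positive points is nonnegative when
`deg p < n` (`dd_nonneg_even`). Letting one of the points tend to `0` or to `∞` gives, for
`2m + 1` points, that the divided difference of `p² h / x` is nonnegative for `deg p ≤ m` and that
of `q² h` is nonpositive for `deg q < m` (`dd_nonneg_odd`, `dd_nonpos_odd`).

Now suppose that `∑ c x * x / (s + x) ≥ 0` for all `s > 0`, where `x` runs through a finite set
`S` of `2m + 1` positive points. Over the common denominator `∏ (s + x)` the numerator is a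
polynomial in `s` of degree at most `2m`, nonnegative on `(0,∞)`, hence a sum of terms `p²` and
`s q²` without loss of degree (`halfLineSOS_of_nonneg`). Since `c x` is the residue at `-x`, up to
the factor `x`, the two inequalities for divided differences add up to `∑ c x * h x ≥ 0` (`dual`).
So the functional sending the kernel `x / (1 - τ + τ x)`, as a function of `τ ∈ [0,1]`, to `h x` is
well defined and positive on the span of these kernels. The M. Riesz extension theorem extends it
to `C([0,1])`, and the Riesz–Markov–Kakutani theorem represents it by a measure
(`exists_measure`). The substitution `t = τ / (1 - τ)` gives `ρ`, and the mass at `τ = 1` is `c`.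

Sufficiency. Each `λ ↦ λ / (1 + t λ)` is matrix monotone because
`⟨x, A (1 + t A)⁻¹ x⟩ = min_z (⟨x - t z, A (x - t z)⟩ + t |z|²)`, whose right hand side is monotone
in `A` (`kernel_mono`); integrate over `t`.
-/

open Matrix MeasureTheory
open scoped ComplexOrder

/-! ### Functional calculus and rank one perturbations -/

/-- A diagonalization of `A` by any unitary matrix computes `matFunCalc h A`: the unitary
`W` relating two diagonalizations intertwines the two diagonal matrices, hence also their
images under `h`. -/
lemma matFunCalc_eq {n : ℕ} (h : ℝ → ℝ) (A U : Matrix (Fin n) (Fin n) ℂ)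
    (hU : U * star U = 1) (d : Fin n → ℝ)
    (hA : A = U * diagonal (fun i => (d i : ℂ)) * star U) :
    matFunCalc h A = U * diagonal (fun i => (h (d i) : ℂ)) * star U := by
  have hU' : star U * U = 1 := mul_eq_one_comm.mp hU
  have hAH : A.IsHermitian := by
    rw [hA, Matrix.IsHermitian]
    simp only [star_eq_conjTranspose, conjTranspose_mul, conjTranspose_conjTranspose,
      diagonal_conjTranspose, Matrix.mul_assoc]
    congr 3
    ext i
    simp
  rw [matFunCalc, dif_pos hAH]
  set V : Matrix (Fin n) (Fin n) ℂ := (hAH.eigenvectorUnitary : Matrix (Fin n) (Fin n) ℂ) with hV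
  set e := hAH.eigenvalues
  have hVV : V * star V = 1 := Unitary.mul_star_self_of_mem hAH.eigenvectorUnitary.2
  have hVV' : star V * V = 1 := mul_eq_one_comm.mp hVV
  have hspec : A = V * diagonal (fun i => (e i : ℂ)) * star V := by
    have := hAH.spectral_theorem
    rw [Unitary.conjStarAlgAut_apply] at this
    simpa [Function.comp_def] using this
  have hW : (star V * U) * diagonal (fun i => (d i : ℂ))
      = diagonal (fun i => (e i : ℂ)) * (star V * U) := by
    have h1 : U * diagonal (fun i => (d i : ℂ)) = A * U := by
      rw [hA, Matrix.mul_assoc _ (star U), hU', Matrix.mul_one]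
    have h2 : star V * A = diagonal (fun i => (e i : ℂ)) * star V := by
      rw [hspec, ← Matrix.mul_assoc, ← Matrix.mul_assoc, hVV', Matrix.one_mul]
    rw [Matrix.mul_assoc, h1, ← Matrix.mul_assoc, h2, Matrix.mul_assoc]
  have hWh : (star V * U) * diagonal (fun i => (h (d i) : ℂ))
      = diagonal (fun i => (h (e i) : ℂ)) * (star V * U) := by
    ext i j
    have := congrFun (congrFun hW i) j
    rw [mul_diagonal, diagonal_mul] at this ⊢
    by_cases hz : (star V * U) i j = 0
    · simp [hz]
    · have h3 : (d j : ℂ) = e i := mul_left_cancel₀ hz (by rw [this, mul_comm])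
      rw [Complex.ofReal_inj.mp h3, mul_comm]
  calc V * diagonal (fun i => (h (e i) : ℂ)) * star V
      = V * (diagonal (fun i => (h (e i) : ℂ)) * (star V * U)) * star U := by
        simp only [Matrix.mul_assoc, hU, Matrix.mul_one]
    _ = U * diagonal (fun i => (h (d i) : ℂ)) * star U := by
        rw [← hWh]
        simp only [← Matrix.mul_assoc, hVV, Matrix.one_mul]

/-- `MonoAt h n`: `h` is matrix monotone of order `n` on positive definite matrices. -/
def MonoAt (h : ℝ → ℝ) (n : ℕ) : Prop :=
  ∀ A₁ A₂ : Matrix (Fin n) (Fin n) ℂ, A₁.PosDef → A₂.PosDef →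
    LoewnerLE A₁ A₂ → LoewnerLE (matFunCalc h A₁) (matFunCalc h A₂)

/-- Matrix monotonicity tested on `diagonal a ≤ diagonal a + u uᵀ`, where the orthogonal
matrix `O` diagonalizes the rank one perturbation with eigenvalues `b`. -/
lemma mono_rank_one {n : ℕ} {h : ℝ → ℝ} (hm : MonoAt h n) (O : Matrix (Fin n) (Fin n) ℝ)
    (hO : Oᵀ * O = 1) (a b u w : Fin n → ℝ) (ha : ∀ i, 0 < a i)
    (hOab : O * diagonal b = diagonal a * O + vecMulVec u w) (hw : Oᵀ *ᵥ u = w)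
    (v : Fin n → ℝ) :
    ∑ i, h (a i) * v i ^ 2 ≤ ∑ k, h (b k) * ((Oᵀ *ᵥ v) k) ^ 2 := by
  have hO' : O * Oᵀ = 1 := mul_eq_one_comm.mp hO
  have hB : O * diagonal b * Oᵀ = diagonal a + vecMulVec u u := by
    have h1 : O *ᵥ w = u := by rw [← hw, mulVec_mulVec, hO', one_mulVec]
    rw [hOab, Matrix.add_mul, Matrix.mul_assoc, hO', Matrix.mul_one, vecMulVec_mul,
      ← mulVec_transpose, transpose_transpose, h1]
  let φ : Matrix (Fin n) (Fin n) ℝ →+* Matrix (Fin n) (Fin n) ℂ := Complex.ofRealHom.mapMatrix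
  have hφd : ∀ d : Fin n → ℝ, φ (diagonal d) = diagonal (fun i => (d i : ℂ)) := fun d => by
    simp [φ]
  have hφs : star (φ O) = φ Oᵀ := by
    ext i j
    simp [φ]
  have hφv : φ (vecMulVec u u) = vecMulVec (fun i => (u i : ℂ)) (star fun i => (u i : ℂ)) := by
    ext i j
    simp [φ, vecMulVec_apply]
  set A : Matrix (Fin n) (Fin n) ℂ := φ (diagonal a) with hA
  set B : Matrix (Fin n) (Fin n) ℂ := φ (O * diagonal b * Oᵀ) with hBdef
  have hAB : B = A + vecMulVec (fun i => (u i : ℂ)) (star fun i => (u i : ℂ)) := by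
    rw [hBdef, hB, map_add, hφv]
  have hps := posSemidef_vecMulVec_self_star (fun i => (u i : ℂ))
  have hApos : A.PosDef := by
    rw [hA, hφd]
    exact PosDef.diagonal fun i => by simpa using ha i
  have hBpos : B.PosDef := hAB ▸ hApos.add_posSemidef hps
  have hle : LoewnerLE A B := by
    rw [LoewnerLE, hAB, add_sub_cancel_left]
    exact hps
  have key := hm A B hApos hBpos hle
  have e1 : matFunCalc h A = φ (diagonal fun i => h (a i)) := by
    rw [matFunCalc_eq h A 1 (by simp) a (by rw [hA, hφd]; simp), hφd]
    simp
  have e2 : matFunCalc h B = φ (O * (diagonal fun i => h (b i)) * Oᵀ) := by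
    rw [matFunCalc_eq h B (φ O) (by rw [hφs, ← map_mul, hO', map_one]) b
      (by rw [hBdef, hφs, map_mul, map_mul, hφd]), hφs, map_mul, map_mul, hφd]
  rw [LoewnerLE, e1, e2, ← map_sub] at key
  set M := O * (diagonal fun i => h (b i)) * Oᵀ - diagonal fun i => h (a i) with hM
  have hq := key.dotProduct_mulVec_nonneg (fun i => (v i : ℂ))
  have hq' : star (fun i => (v i : ℂ)) ⬝ᵥ (φ M *ᵥ fun i => (v i : ℂ))
      = ((v ⬝ᵥ (M *ᵥ v) : ℝ) : ℂ) := by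
    simp [dotProduct, mulVec, φ]
  rw [hq', Complex.zero_le_real] at hq
  have h3 : v ⬝ᵥ (M *ᵥ v)
      = ∑ k, h (b k) * ((Oᵀ *ᵥ v) k) ^ 2 - ∑ i, h (a i) * v i ^ 2 := by
    rw [hM, sub_mulVec, dotProduct_sub]
    congr 1
    · rw [← mulVec_mulVec, ← mulVec_mulVec, dotProduct_mulVec, ← mulVec_transpose]
      simp only [dotProduct, mulVec_diagonal]
      exact Finset.sum_congr rfl fun i _ => by ring
    · simp only [dotProduct, mulVec_diagonal]
      exact Finset.sum_congr rfl fun i _ => by ring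
  linarith

/-! ### Interlacing spectra and divided differences -/

open Polynomial in
/-- The barycentric form of Lagrange interpolation at the nodes `a i`. -/
lemma sum_eval_div_eq {ι : Type*} [DecidableEq ι] (s : Finset ι) (a : ι → ℝ)
    (ha : Set.InjOn a s) (p : ℝ[X]) (hp : p.degree < s.card) (x : ℝ) (hx : ∀ i ∈ s, x ≠ a i) :
    ∑ i ∈ s, p.eval (a i) / ((∏ j ∈ s.erase i, (a i - a j)) * (x - a i))
      = p.eval x / ∏ j ∈ s, (x - a j) := by
  have h1 := Lagrange.eval_interpolate_not_at_node (s := s) (v := a)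
    (fun i => p.eval (a i)) (x := x) hx
  rw [← Lagrange.eq_interpolate ha hp, Lagrange.eval_nodal] at h1
  rw [h1, mul_div_cancel_left₀ _ (Finset.prod_ne_zero_iff.mpr fun i hi => sub_ne_zero.mpr (hx i hi))]
  refine Finset.sum_congr rfl fun i hi => ?_
  rw [Lagrange.nodalWeight, Finset.prod_inv_distrib, div_eq_mul_inv, mul_inv]
  ring

/-- If `a` and `b` interlace, `∏ⱼ (aᵢ - bⱼ)` and `∏_{j ≠ i} (aᵢ - aⱼ)` have opposite signs:
the factors pair up with equal signs for `j ≠ i`, and `aᵢ - bᵢ < 0` is left over. -/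
lemma interlace_sign_a {n : ℕ} {a b : Fin n → ℝ} (hab : ∀ i, a i < b i)
    (hba : ∀ i j, i < j → b i < a j) (i : Fin n) :
    0 < -(∏ j, (a i - b j)) / ∏ j ∈ Finset.univ.erase i, (a i - a j) := by
  rw [← Finset.mul_prod_erase _ _ (Finset.mem_univ i), ← neg_mul, mul_div_assoc,
    ← Finset.prod_div_distrib]
  refine mul_pos (by linarith [hab i]) (Finset.prod_pos fun j hj => ?_)
  rcases lt_or_gt_of_ne (Finset.ne_of_mem_erase hj) with hlt | hlt
  · have := hba j i hlt
    have := hab j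
    exact div_pos (by linarith) (by linarith)
  · have := hba i j hlt
    have := hab j
    have := hab i
    exact div_pos_of_neg_of_neg (by linarith) (by linarith)

lemma interlace_sign_b {n : ℕ} {a b : Fin n → ℝ} (hab : ∀ i, a i < b i)
    (hba : ∀ i j, i < j → b i < a j) (k : Fin n) :
    0 < (∏ j, (b k - a j)) / ∏ j ∈ Finset.univ.erase k, (b k - b j) := by
  rw [← Finset.mul_prod_erase _ _ (Finset.mem_univ k), mul_div_assoc,
    ← Finset.prod_div_distrib]
  refine mul_pos (by linarith [hab k]) (Finset.prod_pos fun j hj => ?_)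
  rcases lt_or_gt_of_ne (Finset.ne_of_mem_erase hj) with hlt | hlt
  · have := hba j k hlt
    have := hab j
    have := hab k
    exact div_pos (by linarith) (by linarith)
  · have := hba k j hlt
    have := hab j
    exact div_pos_of_neg_of_neg (by linarith) (by linarith)

open Polynomial in
/-- Rank one perturbations of `diagonal a` realize every spectrum `b` interlacing with `a`; a
suitable test vector turns matrix monotonicity into nonnegativity of the divided difference of
`p² h` at the `2n` points `aᵢ`, `bₖ`. -/
lemma interlace_nonneg {n : ℕ} {h : ℝ → ℝ} (hm : MonoAt h n) (a b : Fin n → ℝ)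
    (ha : ∀ i, 0 < a i) (hab : ∀ i, a i < b i) (hba : ∀ i j, i < j → b i < a j)
    (p : ℝ[X]) (hp : p.degree < n) :
    0 ≤ ∑ i, h (a i) * p.eval (a i) ^ 2 /
          ((∏ j ∈ Finset.univ.erase i, (a i - a j)) * ∏ j, (a i - b j)) +
        ∑ k, h (b k) * p.eval (b k) ^ 2 /
          ((∏ j, (b k - a j)) * ∏ j ∈ Finset.univ.erase k, (b k - b j)) := by
  set α : Fin n → ℝ := fun i => ∏ j ∈ Finset.univ.erase i, (a i - a j) with hα
  set β : Fin n → ℝ := fun k => ∏ j ∈ Finset.univ.erase k, (b k - b j) with hβ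
  set P : Fin n → ℝ := fun i => ∏ j, (a i - b j) with hP
  set Q : Fin n → ℝ := fun k => ∏ j, (b k - a j) with hQ
  have hua : ∀ i, 0 < -P i / α i := interlace_sign_a hab hba
  have hwb : ∀ k, 0 < Q k / β k := interlace_sign_b hab hba
  have hα0 : ∀ i, α i ≠ 0 := fun i h0 => by simpa [h0] using (hua i).ne'
  have hP0 : ∀ i, P i ≠ 0 := fun i h0 => by simpa [h0] using (hua i).ne'
  have hβ0 : ∀ i, β i ≠ 0 := fun i h0 => by simpa [h0] using (hwb i).ne'
  have hQ0 : ∀ i, Q i ≠ 0 := fun i h0 => by simpa [h0] using (hwb i).ne'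
  have hne : ∀ k i, b k - a i ≠ 0 := fun k i h0 =>
    hQ0 k (Finset.prod_eq_zero (Finset.mem_univ i) h0)
  have hainj : Function.Injective a := fun i j hij => by
    by_contra hne'
    exact hα0 i (Finset.prod_eq_zero (i := j) (by simp [Ne.symm hne']) (by simp [hij]))
  let u : Fin n → ℝ := fun i => √(-P i / α i)
  let w : Fin n → ℝ := fun k => √(Q k / β k)
  have hu2 : ∀ i, u i * u i = -P i / α i := fun i => Real.mul_self_sqrt (hua i).le
  have hw2 : ∀ k, w k * w k = Q k / β k := fun i => Real.mul_self_sqrt (hwb i).le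
  -- a Cauchy matrix, scaled so as to become orthogonal
  let O : Matrix (Fin n) (Fin n) ℝ := Matrix.of fun i k => u i * w k / (b k - a i)
  -- `q k` is the nodal polynomial of the points `b j`, `j ≠ k`
  let q : Fin n → ℝ[X] := fun k => Lagrange.nodal (Finset.univ.erase k) b
  have hqdeg : ∀ k, (q k).natDegree = n - 1 := fun k => by simp [q]
  have hqlt : ∀ k, (q k).degree < (Finset.univ : Finset (Fin n)).card := fun k => by
    have hn : 0 < n := k.pos
    simp only [q, Lagrange.degree_nodal, Finset.card_erase_of_mem (Finset.mem_univ k),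
      Finset.card_univ, Fintype.card_fin]
    exact_mod_cast Nat.sub_lt hn one_pos
  have hPq : ∀ i k, u i * u i / (b k - a i) = (q k).eval (a i) / α i := fun i k => by
    have h1 : P i = (a i - b k) * (q k).eval (a i) := by
      simp only [q, Lagrange.eval_nodal, hP]
      exact (Finset.mul_prod_erase _ (fun j => a i - b j) (Finset.mem_univ k)).symm
    have h2 := hne k i
    have h3 := hα0 i
    rw [hu2, h1]
    field_simp
    ring
  have hO : Oᵀ * O = 1 := by
    ext k l
    have h1 : (Oᵀ * O) k l = w k * w l * ((q k).eval (b l) / Q l) := by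
      rw [← sum_eval_div_eq Finset.univ a hainj.injOn (q k) (hqlt k) (b l)
        (fun i _ => sub_ne_zero.mp (hne l i)), mul_apply, Finset.mul_sum]
      refine Finset.sum_congr rfl fun i _ => ?_
      have h2 := hPq i k
      calc _ = w k * w l * (u i * u i / (b k - a i) / (b l - a i)) := by
            simp only [O, transpose_apply, of_apply]; ring
        _ = _ := by rw [h2, div_div]
    rw [h1]
    by_cases hkl : k = l
    · subst hkl
      have h2 : (q k).eval (b k) = β k := by simp only [q, Lagrange.eval_nodal, hβ]
      rw [h2, hw2, Matrix.one_apply_eq]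
      have := hQ0 k
      have := hβ0 k
      field_simp
    · have h2 : (q k).eval (b l) = 0 :=
        Lagrange.eval_nodal_at_node (Finset.mem_erase.mpr ⟨Ne.symm hkl, Finset.mem_univ l⟩)
      rw [h2, Matrix.one_apply_ne hkl]
      simp
  have hOab : O * diagonal b = diagonal a * O + vecMulVec u w := by
    ext i k
    have := hne k i
    rw [mul_diagonal, Matrix.add_apply, diagonal_mul, vecMulVec_apply]
    simp only [O, of_apply]
    field_simp
    ring
  have hw : Oᵀ *ᵥ u = w := by
    ext k
    have h1 := Lagrange.coeff_eq_sum (s := Finset.univ) hainj.injOn (hqlt k)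
    have h2 : (q k).coeff (n - 1) = 1 := by
      rw [← hqdeg k]
      exact Lagrange.nodal_monic
    rw [Finset.card_univ, Fintype.card_fin, h2] at h1
    calc _ = ∑ i, w k * (u i * u i / (b k - a i)) :=
          Finset.sum_congr rfl fun i _ => by
            simp only [O, transpose_apply, of_apply]; ring
      _ = w k * ∑ i, (q k).eval (a i) / α i := by
          rw [Finset.mul_sum]
          exact Finset.sum_congr rfl fun i _ => by rw [hPq]
      _ = w k := by rw [← h1, mul_one]
  have key := mono_rank_one hm O hO a b u w ha hOab hw (fun i => p.eval (a i) * u i / P i)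
  have e1 : ∀ i, (p.eval (a i) * u i / P i) ^ 2 = -(p.eval (a i) ^ 2 / (α i * P i)) := fun i => by
    have h1 := hu2 i
    have := hP0 i
    have := hα0 i
    calc _ = p.eval (a i) ^ 2 * (u i * u i) / P i ^ 2 := by ring
      _ = _ := by
        rw [h1]
        field_simp
  have e2 : ∀ k, (Oᵀ *ᵥ fun i => p.eval (a i) * u i / P i) k
      = -(w k * (p.eval (b k) / Q k)) := fun k => by
    rw [← sum_eval_div_eq Finset.univ a hainj.injOn p (by simpa using hp) (b k)
        (fun i _ => sub_ne_zero.mp (hne k i)), Finset.mul_sum, ← Finset.sum_neg_distrib]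
    change ∑ i, Oᵀ k i * (p.eval (a i) * u i / P i) = _
    refine Finset.sum_congr rfl fun i _ => ?_
    have h1 := hu2 i
    have := hP0 i
    have := hα0 i
    have := hne k i
    calc _ = w k * (p.eval (a i) * (u i * u i) / (b k - a i) / P i) := by
          simp only [O, transpose_apply, of_apply]; ring
      _ = -(w k * (p.eval (a i) / (α i * (b k - a i)))) := by
          rw [h1]
          field_simp
  have e3 : ∀ k, (-(w k * (p.eval (b k) / Q k))) ^ 2 = p.eval (b k) ^ 2 / (Q k * β k) :=
    fun k => by
      have h1 := hw2 k
      have := hQ0 k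
      have := hβ0 k
      calc _ = (w k * w k) * p.eval (b k) ^ 2 / Q k ^ 2 := by ring
        _ = _ := by
          rw [h1]
          field_simp
  simp only [e1, e2, e3, mul_neg, Finset.sum_neg_distrib] at key
  simp only [mul_div_assoc]
  linarith

/-- The coefficient of `f x` in the divided difference of `f` at the points of `S` is the
inverse of this product. -/
noncomputable def ddDen (S : Finset ℝ) (x : ℝ) : ℝ := ∏ y ∈ S.erase x, (x - y)

open Polynomial in
/-- Matrix monotonicity of order `n` gives nonnegativity of the divided differences of `p² h` at
`2n` points, for `deg p < n`. -/
lemma dd_nonneg_even {n : ℕ} {h : ℝ → ℝ} (hm : MonoAt h n) (S : Finset ℝ)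
    (hS : S.card = 2 * n) (hpos : ∀ x ∈ S, 0 < x) (p : ℝ[X]) (hp : p.degree < n) :
    0 ≤ ∑ x ∈ S, h x * p.eval x ^ 2 / ddDen S x := by
  let e := S.orderEmbOfFin hS
  let a : Fin n → ℝ := fun i => e ⟨2 * i, by omega⟩
  let b : Fin n → ℝ := fun i => e ⟨2 * i + 1, by omega⟩
  have ha : ∀ i, a i ∈ S := fun i => S.orderEmbOfFin_mem hS _
  have hb : ∀ i, b i ∈ S := fun i => S.orderEmbOfFin_mem hS _
  have hai : Function.Injective a := fun i j hij => by
    have := e.injective hij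
    simp only [Fin.mk.injEq] at this
    exact Fin.ext (by omega)
  have hbi : Function.Injective b := fun i j hij => by
    have := e.injective hij
    simp only [Fin.mk.injEq] at this
    exact Fin.ext (by omega)
  have hdisj : Disjoint (Finset.univ.image a) (Finset.univ.image b) := by
    rw [Finset.disjoint_left]
    intro x hx hx'
    obtain ⟨i, -, rfl⟩ := Finset.mem_image.mp hx
    obtain ⟨j, -, hj⟩ := Finset.mem_image.mp hx'
    have := e.injective hj
    simp only [Fin.mk.injEq] at this
    omega
  have hSab : S = Finset.univ.image a ∪ Finset.univ.image b := by
    symm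
    apply Finset.eq_of_subset_of_card_le
    · intro x hx
      rcases Finset.mem_union.mp hx with hx | hx <;>
      · obtain ⟨i, -, rfl⟩ := Finset.mem_image.mp hx
        simp [ha, hb]
    · rw [Finset.card_union_of_disjoint hdisj, Finset.card_image_of_injective _ hai,
        Finset.card_image_of_injective _ hbi, hS]
      simp only [Finset.card_univ, Fintype.card_fin]
      omega
  have key := interlace_nonneg hm a b (fun i => hpos _ (ha i))
    (fun i => e.strictMono (by simp)) (fun i j hij => e.strictMono (by
      simp only [Fin.mk_lt_mk]
      have : (i : ℕ) < j := hij
      omega)) p hp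
  have hanb : ∀ i, a i ∉ Finset.univ.image b := fun i =>
    Finset.disjoint_left.mp hdisj (Finset.mem_image_of_mem a (Finset.mem_univ i))
  have hbna : ∀ i, b i ∉ Finset.univ.image a := fun i =>
    Finset.disjoint_right.mp hdisj (Finset.mem_image_of_mem b (Finset.mem_univ i))
  have ea : ∀ i, ddDen S (a i)
      = (∏ j ∈ Finset.univ.erase i, (a i - a j)) * ∏ j, (a i - b j) := fun i => by
    rw [ddDen, hSab, Finset.erase_union_distrib, Finset.erase_eq_of_notMem (hanb i),
      ← Finset.image_erase hai, Finset.prod_union, Finset.prod_image hai.injOn,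
      Finset.prod_image hbi.injOn]
    exact hdisj.mono_left (Finset.image_subset_image (Finset.erase_subset _ _))
  have eb : ∀ i, ddDen S (b i)
      = (∏ j, (b i - a j)) * ∏ j ∈ Finset.univ.erase i, (b i - b j) := fun i => by
    rw [ddDen, hSab, Finset.erase_union_distrib, Finset.erase_eq_of_notMem (hbna i),
      ← Finset.image_erase hbi, Finset.prod_union, Finset.prod_image hai.injOn,
      Finset.prod_image hbi.injOn]
    exact hdisj.mono_right (Finset.image_subset_image (Finset.erase_subset _ _))
  calc _ ≤ _ := key
    _ = ∑ x ∈ Finset.univ.image a ∪ Finset.univ.image b, h x * p.eval x ^ 2 / ddDen S x := by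
        rw [Finset.sum_union hdisj, Finset.sum_image hai.injOn, Finset.sum_image hbi.injOn]
        simp only [ea, eb]
    _ = _ := by rw [← hSab]

/-! ### Limits of an extra point -/

lemma ddDen_insert {S : Finset ℝ} {t x : ℝ} (ht : t ∉ S) (hx : x ∈ S) :
    ddDen (insert t S) x = (x - t) * ddDen S x := by
  have hne : t ≠ x := fun h => ht (h ▸ hx)
  rw [ddDen, Finset.erase_insert_of_ne hne, Finset.prod_insert (by simp [ht]), ddDen]

lemma ddDen_insert_self {S : Finset ℝ} {t : ℝ} (ht : t ∉ S) :
    ddDen (insert t S) t = ∏ y ∈ S, (t - y) := by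
  rw [ddDen, Finset.erase_insert ht]

lemma ddDen_ne_zero (S : Finset ℝ) (x : ℝ) : ddDen S x ≠ 0 :=
  Finset.prod_ne_zero_iff.mpr fun _ hy => sub_ne_zero.mpr (Finset.ne_of_mem_erase hy).symm

open Polynomial Filter Topology in
/-- Apply `dd_nonneg_even` to `S ∪ {δ}` and let `δ → 0⁺`; the term of the extra point is
nonpositive because `h δ ≥ 0`. -/
lemma dd_nonneg_odd {m : ℕ} {h : ℝ → ℝ} (hm : MonoAt h (m + 1)) (hpos : ∀ x, 0 < x → 0 < h x)
    (S : Finset ℝ) (hS : S.card = 2 * m + 1) (hSpos : ∀ x ∈ S, 0 < x)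
    (p : ℝ[X]) (hp : p.natDegree ≤ m) :
    0 ≤ ∑ x ∈ S, h x / x * p.eval x ^ 2 / ddDen S x := by
  have hne : S.Nonempty := Finset.card_pos.mp (by omega)
  have hmin : 0 < S.min' hne := hSpos _ (S.min'_mem hne)
  have hdeg : p.degree < (m + 1 : ℕ) :=
    lt_of_le_of_lt degree_le_natDegree (by exact_mod_cast Nat.lt_succ_of_le hp)
  have hev : ∀ᶠ δ in 𝓝[>] (0 : ℝ),
      0 ≤ ∑ x ∈ S, h x * p.eval x ^ 2 / ((x - δ) * ddDen S x) := by
    filter_upwards [Ioo_mem_nhdsGT hmin] with δ hδ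
    have hlt : ∀ x ∈ S, δ < x := fun x hx => lt_of_lt_of_le hδ.2 (S.min'_le x hx)
    have hδS : δ ∉ S := fun hx => lt_irrefl _ (hlt δ hx)
    have key := dd_nonneg_even hm (insert δ S)
      (by rw [Finset.card_insert_of_notMem hδS, hS]; ring)
      (fun x hx => by
        rcases Finset.mem_insert.mp hx with rfl | hx
        · exact hδ.1
        · exact hSpos x hx) p hdeg
    rw [Finset.sum_insert hδS, ddDen_insert_self hδS] at key
    have hsign : ∏ y ∈ S, (δ - y) ≤ 0 := by
      have h1 : ∏ y ∈ S, (δ - y) = (-1) ^ S.card * ∏ y ∈ S, (y - δ) := by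
        rw [← Finset.prod_const, ← Finset.prod_mul_distrib]
        exact Finset.prod_congr rfl fun y _ => by ring
      have h2 : 0 ≤ ∏ y ∈ S, (y - δ) :=
        Finset.prod_nonneg fun y hy => sub_nonneg.mpr (hlt y hy).le
      rw [h1, hS, (Odd.neg_one_pow ⟨m, rfl⟩ : (-1 : ℝ) ^ (2 * m + 1) = -1)]
      linarith
    have h3 : h δ * p.eval δ ^ 2 / ∏ y ∈ S, (δ - y) ≤ 0 :=
      div_nonpos_of_nonneg_of_nonpos (mul_nonneg (hpos δ hδ.1).le (sq_nonneg _)) hsign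
    rw [Finset.sum_congr rfl fun x hx => by rw [ddDen_insert hδS hx]] at key
    linarith
  refine ge_of_tendsto (x := 𝓝[>] (0 : ℝ)) ?_ hev
  refine tendsto_finsetSum _ fun x hx => ?_
  have hx0 := (hSpos x hx).ne'
  have hd := ddDen_ne_zero S x
  have hc : ContinuousAt (fun δ : ℝ => h x * p.eval x ^ 2 / ((x - δ) * ddDen S x)) 0 := by
    refine ContinuousAt.div (by fun_prop) (by fun_prop) ?_
    simpa using ⟨hx0, hd⟩
  have h1 := hc.tendsto.mono_left (nhdsWithin_le_nhds (s := Set.Ioi 0))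
  convert h1 using 2
  rw [sub_zero]
  field_simp

open Polynomial in
/-- Linear growth: the case of the three points `1`, `y`, `2y` and a `p` vanishing at `2y`. -/
lemma growth {h : ℝ → ℝ} (hm : MonoAt h 2) (hpos : ∀ x, 0 < x → 0 < h x) {y : ℝ} (hy : 1 < y) :
    h y ≤ 2 * h 1 * y := by
  have n1 : (1 : ℝ) ≠ y := hy.ne
  have n2 : (1 : ℝ) ≠ 2 * y := by linarith
  have n3 : y ≠ 2 * y := by linarith
  have key := dd_nonneg_odd (m := 1) hm hpos {1, y, 2 * y} (by simp [n1, n2, n3])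
    (by simp only [Finset.mem_insert, Finset.mem_singleton]
        rintro x (rfl | rfl | rfl) <;> linarith)
    (X - C (2 * y)) (natDegree_X_sub_C _).le
  rw [Finset.sum_insert (by simp [n1, n2]), Finset.sum_insert (by simp [n3]),
    Finset.sum_singleton] at key
  have d1 : ddDen {1, y, 2 * y} 1 = (1 - y) * (1 - 2 * y) := by
    rw [ddDen, Finset.erase_insert (by simp [n1, n2]), Finset.prod_pair n3]
  have d2 : ddDen {1, y, 2 * y} y = (y - 1) * (y - 2 * y) := by
    rw [Finset.insert_comm, ddDen, Finset.erase_insert (by simp [n1.symm, n3]),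
      Finset.prod_pair n2]
  rw [d1, d2] at key
  simp only [eval_sub, eval_X, eval_C, sub_self] at key
  have hy0 : 0 < y - 1 := by linarith
  have e : h 1 / 1 * (1 - 2 * y) ^ 2 / ((1 - y) * (1 - 2 * y))
      + (h y / y * (y - 2 * y) ^ 2 / ((y - 1) * (y - 2 * y))
        + h (2 * y) / (2 * y) * 0 ^ 2 / ddDen {1, y, 2 * y} (2 * y))
      = ((2 * y - 1) * h 1 - h y) / (y - 1) := by
    have a1 : 1 - y ≠ 0 := by linarith
    have a2 : 1 - 2 * y ≠ 0 := by linarith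
    have a3 : y - 1 ≠ 0 := by linarith
    have a4 : y ≠ 0 := by linarith
    have a5 : y - 2 * y ≠ 0 := by linarith
    have t1 : h 1 / 1 * (1 - 2 * y) ^ 2 / ((1 - y) * (1 - 2 * y))
        = (2 * y - 1) * h 1 / (y - 1) := by
      rw [div_eq_div_iff (mul_ne_zero a1 a2) a3]; ring
    have t2 : h y / y * (y - 2 * y) ^ 2 / ((y - 1) * (y - 2 * y)) = - h y / (y - 1) := by
      rw [div_eq_div_iff (mul_ne_zero a3 a5) a3]; field_simp; ring
    rw [t1, t2]
    ring
  rw [e] at key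
  have h2 := mul_nonneg key hy0.le
  rw [div_mul_cancel₀ _ hy0.ne'] at h2
  have := hpos 1 one_pos
  linarith

open Polynomial Filter Topology in
/-- Apply `dd_nonneg_even` to `S ∪ {M}`, multiply by `M`, and let `M → ∞`; the term of the extra
point vanishes in the limit by the linear growth of `h`. -/
lemma dd_nonpos_odd {m : ℕ} {h : ℝ → ℝ} (hm : MonoAt h (m + 1)) (hm2 : MonoAt h 2)
    (hpos : ∀ x, 0 < x → 0 < h x)
    (S : Finset ℝ) (hS : S.card = 2 * m + 1) (hSpos : ∀ x ∈ S, 0 < x)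
    (q : ℝ[X]) (hq : q.natDegree + 1 ≤ m) :
    ∑ x ∈ S, h x * q.eval x ^ 2 / ddDen S x ≤ 0 := by
  have hdeg : q.degree < (m + 1 : ℕ) :=
    lt_of_le_of_lt degree_le_natDegree (by exact_mod_cast (by omega : q.natDegree < m + 1))
  have hev : ∀ᶠ M in atTop, 0 ≤ ∑ x ∈ S, h x * q.eval x ^ 2 / ddDen S x * (M / (x - M))
      + 2 * h 1 * ((X ^ 2 * q ^ 2).eval M / (Lagrange.nodal S id).eval M) := by
    filter_upwards [eventually_gt_atTop 1, (Finset.eventually_all S).mpr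
      fun x _ => eventually_gt_atTop x] with M hM1 hlt
    have hMS : M ∉ S := fun hx => lt_irrefl _ (hlt M hx)
    have key := dd_nonneg_even hm (insert M S)
      (by rw [Finset.card_insert_of_notMem hMS, hS]; ring)
      (fun x hx => by
        rcases Finset.mem_insert.mp hx with rfl | hx
        · linarith
        · exact hSpos x hx) q hdeg
    rw [Finset.sum_insert hMS, ddDen_insert_self hMS,
      Finset.sum_congr rfl fun x hx => by rw [ddDen_insert hMS hx]] at key
    have hprod : 0 < ∏ y ∈ S, (M - y) := Finset.prod_pos fun y hy => sub_pos.mpr (hlt y hy)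
    have key2 := mul_nonneg (by linarith : 0 ≤ M) key
    rw [mul_add, Finset.mul_sum] at key2
    have h1 : M * (h M * q.eval M ^ 2 / ∏ y ∈ S, (M - y))
        ≤ 2 * h 1 * ((X ^ 2 * q ^ 2).eval M / (Lagrange.nodal S id).eval M) := by
      simp only [Lagrange.eval_nodal, eval_mul, eval_pow, eval_X, id]
      rw [← mul_div_assoc, ← mul_div_assoc, div_le_div_iff_of_pos_right hprod]
      have := mul_le_mul_of_nonneg_right (growth hm2 hpos hM1)
        (mul_nonneg (by linarith : 0 ≤ M) (sq_nonneg (q.eval M)))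
      linarith
    have h2 : ∑ x ∈ S, M * (h x * q.eval x ^ 2 / ((x - M) * ddDen S x))
        = ∑ x ∈ S, h x * q.eval x ^ 2 / ddDen S x * (M / (x - M)) :=
      Finset.sum_congr rfl fun x _ => by rw [mul_comm (x - M), ← div_div]; ring
    rw [h2] at key2
    linarith
  have hlim1 : ∀ x : ℝ, Tendsto (fun M : ℝ => M / (x - M)) atTop (𝓝 (-1)) := fun x => by
    have h1 := div_tendsto_atTop_leadingCoeff_div_of_degree_eq (X : ℝ[X]) (C x - X)
      (by rw [degree_X, ← neg_sub, degree_neg, degree_X_sub_C])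
    have h2 : (C x - X : ℝ[X]).leadingCoeff = -1 := by
      rw [← neg_sub, leadingCoeff_neg, leadingCoeff_X_sub_C]
    rw [h2] at h1
    simpa using h1
  have hlim2 : Tendsto (fun M : ℝ => (X ^ 2 * q ^ 2).eval M / (Lagrange.nodal S id).eval M)
      atTop (𝓝 0) := by
    apply div_tendsto_atTop_zero_of_degree_lt
    rw [Lagrange.degree_nodal, hS]
    refine lt_of_le_of_lt degree_le_natDegree ?_
    have h1 : (X ^ 2 * q ^ 2).natDegree ≤ 2 + 2 * q.natDegree :=
      natDegree_mul_le.trans (add_le_add (by simp) natDegree_pow_le)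
    exact_mod_cast (by omega : (X ^ 2 * q ^ 2).natDegree < 2 * m + 1)
  have hlim : Tendsto (fun M => ∑ x ∈ S, h x * q.eval x ^ 2 / ddDen S x * (M / (x - M))
      + 2 * h 1 * ((X ^ 2 * q ^ 2).eval M / (Lagrange.nodal S id).eval M)) atTop
      (𝓝 (∑ x ∈ S, h x * q.eval x ^ 2 / ddDen S x * (-1) + 2 * h 1 * 0)) :=
    (tendsto_finsetSum _ fun x _ => (hlim1 x).const_mul _).add (hlim2.const_mul _)
  have := ge_of_tendsto hlim hev
  simp only [mul_neg, mul_one, mul_zero, add_zero, Finset.sum_neg_distrib] at this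
  linarith

/-! ### Polynomials nonnegative on the half-line -/

open Polynomial in
/-- Sums of polynomials `p²` and `X q²`, each summand being of degree at most `d`. -/
inductive HalfLineSOS (d : ℕ) : ℝ[X] → Prop
  | sq (p : ℝ[X]) : 2 * p.natDegree ≤ d → HalfLineSOS d (p ^ 2)
  | xsq (q : ℝ[X]) : 2 * q.natDegree + 1 ≤ d → HalfLineSOS d (X * q ^ 2)
  | add (P Q : ℝ[X]) : HalfLineSOS d P → HalfLineSOS d Q → HalfLineSOS d (P + Q)

open Polynomial in
lemma HalfLineSOS.mul {d e : ℕ} {P Q : ℝ[X]} (hP : HalfLineSOS d P) (hQ : HalfLineSOS e Q) :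
    HalfLineSOS (d + e) (P * Q) := by
  induction hP with
  | add P₁ P₂ _ _ h1 h2 => rw [add_mul]; exact .add _ _ h1 h2
  | sq p hp =>
    induction hQ with
    | add Q₁ Q₂ _ _ h1 h2 => rw [mul_add]; exact .add _ _ h1 h2
    | sq q hq =>
      rw [← mul_pow]
      exact .sq _ (by have := natDegree_mul_le (p := p) (q := q); omega)
    | xsq q hq =>
      rw [show p ^ 2 * (X * q ^ 2) = X * (p * q) ^ 2 by ring]
      exact .xsq _ (by have := natDegree_mul_le (p := p) (q := q); omega)
  | xsq p hp =>
    induction hQ with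
    | add Q₁ Q₂ _ _ h1 h2 => rw [mul_add]; exact .add _ _ h1 h2
    | sq q hq =>
      rw [show X * p ^ 2 * q ^ 2 = X * (p * q) ^ 2 by ring]
      exact .xsq _ (by have := natDegree_mul_le (p := p) (q := q); omega)
    | xsq q hq =>
      rw [show X * p ^ 2 * (X * q ^ 2) = (X * (p * q)) ^ 2 by ring]
      refine .sq _ ?_
      have h1 := natDegree_mul_le (p := p) (q := q)
      have h2 := natDegree_mul_le (p := X) (q := p * q)
      rw [natDegree_X] at h2
      omega

open Polynomial Filter Topology in
/-- A nonzero polynomial which is nonnegative on `(0,∞)` is a sum of terms `p²` and `X q²` without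
loss of degree: split off, one at a time, a factor belonging to a root in `ℂ`. -/
lemma halfLineSOS_of_nonneg : ∀ (d : ℕ) (P : ℝ[X]), P.natDegree = d → P ≠ 0 →
    (∀ s, 0 < s → 0 ≤ P.eval s) → HalfLineSOS d P := by
  intro d
  induction d using Nat.strong_induction_on with
  | _ d ih =>
  intro P hPd hP0 hP
  rcases Nat.eq_zero_or_pos d with rfl | hd
  · rw [eq_C_of_natDegree_eq_zero hPd] at hP ⊢
    have hc := hP 1 one_pos
    rw [eval_C] at hc
    rw [← Real.sq_sqrt hc, C_pow]
    exact .sq _ (by simp)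
  obtain ⟨z, hz⟩ := IsAlgClosed.exists_aeval_eq_zero ℂ P
    (by rw [degree_eq_natDegree hP0, hPd]; exact_mod_cast hd.ne')
  by_cases him : z.im = 0
  · have hroot : P.IsRoot z.re := by
      have h1 : z = algebraMap ℝ ℂ z.re := Complex.ext (by simp) (by simp [him])
      rw [h1, aeval_algebraMap_apply] at hz
      simpa [IsRoot] using hz
    obtain ⟨R, hR⟩ := dvd_iff_isRoot.mpr hroot
    set r := z.re
    have hR0 : R ≠ 0 := fun h => hP0 (by rw [hR, h, mul_zero])
    have hRd : R.natDegree + 1 = d := by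
      rw [← hPd, hR, natDegree_mul (X_sub_C_ne_zero r) hR0, natDegree_X_sub_C, add_comm]
    have hPR : ∀ s, P.eval s = (s - r) * R.eval s := fun s => by rw [hR]; simp
    rcases le_or_gt r 0 with hr | hr
    · have h1 : HalfLineSOS 1 (X - C r) := by
        have : (X - C r : ℝ[X]) = X * 1 ^ 2 + C √(-r) ^ 2 := by
          rw [← C_pow, Real.sq_sqrt (by linarith), C_neg]
          ring
        rw [this]
        exact .add _ _ (.xsq _ (by simp)) (.sq _ (by simp))
      have h2 := ih _ (by omega) R rfl hR0 fun s hs => by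
        have := hP s hs
        rw [hPR] at this
        exact nonneg_of_mul_nonneg_right this (by linarith)
      rw [hR, ← hRd, add_comm]
      exact h1.mul h2
    · have hRr : R.eval r = 0 := by
        apply le_antisymm
        · have hc : Tendsto (fun s => R.eval s) (𝓝[<] r) (𝓝 (R.eval r)) :=
            R.continuous.continuousAt.tendsto.mono_left nhdsWithin_le_nhds
          refine le_of_tendsto hc ?_
          filter_upwards [Ioo_mem_nhdsLT hr] with s hs
          have := hP s hs.1
          rw [hPR] at this
          by_contra! hcon
          exact absurd this (not_le.mpr (mul_neg_of_neg_of_pos (by linarith [hs.2]) hcon))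
        · have hc : Tendsto (fun s => R.eval s) (𝓝[>] r) (𝓝 (R.eval r)) :=
            R.continuous.continuousAt.tendsto.mono_left nhdsWithin_le_nhds
          refine ge_of_tendsto hc ?_
          filter_upwards [self_mem_nhdsWithin] with s hs
          have hs' : r < s := hs
          have := hP s (by linarith)
          rw [hPR] at this
          exact nonneg_of_mul_nonneg_right this (by linarith)
      obtain ⟨T, hT⟩ := dvd_iff_isRoot.mpr hRr
      have hT0 : T ≠ 0 := fun h => hR0 (by rw [hT, h, mul_zero])
      have hTd : T.natDegree + 1 = R.natDegree := by
        rw [hT, natDegree_mul (X_sub_C_ne_zero r) hT0, natDegree_X_sub_C, add_comm]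
      have hPT : ∀ s, P.eval s = (s - r) ^ 2 * T.eval s := fun s => by
        rw [hPR, hT]; simp; ring
      have hTne : ∀ s, 0 < s → s ≠ r → 0 ≤ T.eval s := fun s hs hsr => by
        have := hP s hs
        rw [hPT] at this
        exact nonneg_of_mul_nonneg_right this
          (by have := sub_ne_zero.mpr hsr; positivity)
      have h2 := ih _ (by omega) T rfl hT0 fun s hs => by
        by_cases hsr : s = r
        · subst hsr
          have hc : Tendsto (fun s => T.eval s) (𝓝[>] r) (𝓝 (T.eval r)) :=
            T.continuous.continuousAt.tendsto.mono_left nhdsWithin_le_nhds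
          refine ge_of_tendsto hc ?_
          filter_upwards [self_mem_nhdsWithin] with s hs
          have hs' : r < s := hs
          exact hTne s (by linarith) hs'.ne'
        · exact hTne s hs hsr
      have h1 : HalfLineSOS 2 ((X - C r) ^ 2) := .sq _ (by simp)
      rw [show P = (X - C r) ^ 2 * T by rw [hR, hT]; ring,
        show d = 2 + T.natDegree by omega]
      exact h1.mul h2
  · obtain ⟨R, hR⟩ := P.quadratic_dvd_of_aeval_eq_zero_im_ne_zero hz him
    have hQ : (X ^ 2 - C (2 * z.re) * X + C (‖z‖ ^ 2) : ℝ[X])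
        = (X - C z.re) ^ 2 + C z.im ^ 2 := by
      rw [Complex.sq_norm, Complex.normSq_apply]
      simp only [C_mul, C_add]
      rw [show (C 2 : ℝ[X]) = 2 from rfl]
      ring
    rw [hQ] at hR
    have hQd : ((X - C z.re) ^ 2 + C z.im ^ 2 : ℝ[X]).natDegree = 2 := by
      rw [← C_pow, natDegree_add_C, natDegree_pow, natDegree_X_sub_C]
    have hR0 : R ≠ 0 := fun h => hP0 (by rw [hR, h, mul_zero])
    have hRd : d = 2 + R.natDegree := by
      rw [← hPd, hR, natDegree_mul (fun h => by simp [h] at hQd) hR0, hQd]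
    have h2 := ih _ (by omega) R rfl hR0 fun s hs => by
      have := hP s hs
      rw [hR, eval_mul] at this
      refine nonneg_of_mul_nonneg_right this ?_
      simp only [eval_add, eval_pow, eval_sub, eval_X, eval_C]
      positivity
    have h1 : HalfLineSOS 2 ((X - C z.re) ^ 2 + C z.im ^ 2) :=
      .add _ _ (.sq _ (by simp)) (.sq _ (by simp))
    rw [hR, hRd]
    exact h1.mul h2

open Polynomial in
/-- The inequalities of `dd_nonneg_odd` and `dd_nonpos_odd`, in the variable `s = -x`, added up. -/
lemma HalfLineSOS.functional_nonneg {m d : ℕ} {h : ℝ → ℝ} (hm : MonoAt h (m + 1))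
    (hm2 : MonoAt h 2) (hpos : ∀ x, 0 < x → 0 < h x)
    (S : Finset ℝ) (hS : S.card = 2 * m + 1) (hSpos : ∀ x ∈ S, 0 < x)
    {P : ℝ[X]} (hP : HalfLineSOS d P) (hd : d ≤ 2 * m) :
    0 ≤ ∑ x ∈ S, h x / x * P.eval (-x) / ddDen S x := by
  have hcomp : ∀ p : ℝ[X], (p.comp (-X)).natDegree = p.natDegree := fun p => by
    rw [natDegree_comp, natDegree_neg, natDegree_X, mul_one]
  induction hP with
  | sq p hp =>
    have := dd_nonneg_odd hm hpos S hS hSpos (p.comp (-X)) (by rw [hcomp]; omega)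
    simpa using this
  | xsq q hq =>
    have := dd_nonpos_odd hm hm2 hpos S hS hSpos (q.comp (-X)) (by rw [hcomp]; omega)
    have e : ∑ x ∈ S, h x / x * (X * q ^ 2).eval (-x) / ddDen S x
        = -∑ x ∈ S, h x * (q.comp (-X)).eval x ^ 2 / ddDen S x := by
      rw [← Finset.sum_neg_distrib]
      refine Finset.sum_congr rfl fun x hx => ?_
      have := (hSpos x hx).ne'
      simp only [eval_mul, eval_X, eval_pow, eval_comp, eval_neg]
      field_simp
    rw [e]
    linarith
  | add P Q _ _ h1 h2 =>
    simp only [eval_add, mul_add, add_div, Finset.sum_add_distrib]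
    exact add_nonneg h1 h2

open Polynomial in
/-- The finite-dimensional dual form of the representation: a combination of point evaluations
which is nonnegative on the functions `x ↦ x / (s + x)`, `s > 0`, is nonnegative on `h`. -/
lemma dual_odd {m : ℕ} {h : ℝ → ℝ} (hm : MonoAt h (m + 1)) (hm2 : MonoAt h 2)
    (hpos : ∀ x, 0 < x → 0 < h x)
    (S : Finset ℝ) (hS : S.card = 2 * m + 1) (hSpos : ∀ x ∈ S, 0 < x)
    (c : ℝ → ℝ) (hc : ∀ s, 0 < s → 0 ≤ ∑ x ∈ S, c x * (x / (s + x))) :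
    0 ≤ ∑ x ∈ S, c x * h x := by
  -- the partial fractions with these residues have numerator `T (-s)`
  let T : ℝ[X] := Lagrange.interpolate S id fun x => c x * x * ddDen S x
  have hTdeg : T.degree < S.card := Lagrange.degree_interpolate_lt _ Function.injective_id.injOn
  have hTx : ∀ x ∈ S, T.eval x = c x * x * ddDen S x := fun x hx =>
    Lagrange.eval_interpolate_at_node (v := id) _ Function.injective_id.injOn hx
  have hTneg : ∀ s, 0 < s → 0 ≤ T.eval (-s) := fun s hs => by
    have hne : ∀ x ∈ S, -s ≠ id x := fun x hx => by
      have := hSpos x hx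
      simp only [id]
      linarith
    have h1 := sum_eval_div_eq S id Function.injective_id.injOn T hTdeg (-s) hne
    have h2 : ∑ i ∈ S, T.eval (id i) / ((∏ j ∈ S.erase i, (id i - id j)) * (-s - id i))
        = -∑ x ∈ S, c x * (x / (s + x)) := by
      rw [← Finset.sum_neg_distrib]
      refine Finset.sum_congr rfl fun x hx => ?_
      have e : (∏ j ∈ S.erase x, (id x - id j)) = ddDen S x := rfl
      have := ddDen_ne_zero S x
      have a1 : s + x ≠ 0 := by linarith [hSpos x hx]
      have a2 : -s - x ≠ 0 := by linarith [hSpos x hx]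
      rw [e]
      simp only [id]
      rw [hTx x hx, show -s - x = -(s + x) by ring]
      field_simp
    have h3 : ∏ j ∈ S, (-s - id j) = -∏ j ∈ S, (s + j) := by
      have h4 : ∏ y ∈ S, (-s - id y) = (-1) ^ S.card * ∏ y ∈ S, (s + y) := by
        rw [← Finset.prod_const, ← Finset.prod_mul_distrib]
        exact Finset.prod_congr rfl fun y _ => by simp only [id]; ring
      rw [h4, hS, (Odd.neg_one_pow ⟨m, rfl⟩ : (-1 : ℝ) ^ (2 * m + 1) = -1), neg_one_mul]
    have h5 : 0 < ∏ j ∈ S, (s + j) := Finset.prod_pos fun y hy => by linarith [hSpos y hy]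
    rw [h2, h3, div_neg, neg_inj] at h1
    have := hc s hs
    rw [h1] at this
    have h6 := mul_nonneg this h5.le
    rwa [div_mul_cancel₀ _ h5.ne'] at h6
  have hsum : ∑ x ∈ S, c x * h x = ∑ x ∈ S, h x / x * T.eval x / ddDen S x :=
    Finset.sum_congr rfl fun x hx => by
      have := ddDen_ne_zero S x
      have := (hSpos x hx).ne'
      rw [hTx x hx]
      field_simp
  rw [hsum]
  by_cases hT0 : T = 0
  · simp [hT0]
  have hQ0 : T.comp (-X) ≠ 0 := fun h0 => hT0 (by
    have : (T.comp (-X)).comp (-X) = T := by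
      rw [comp_assoc]; simp
    rw [← this, h0, zero_comp])
  have hQd : (T.comp (-X)).natDegree ≤ 2 * m := by
    rw [natDegree_comp, natDegree_neg, natDegree_X, mul_one]
    have h1 := hTdeg
    rw [degree_eq_natDegree hT0, hS] at h1
    have h2 : T.natDegree < 2 * m + 1 := by exact_mod_cast h1
    omega
  have := (halfLineSOS_of_nonneg _ (T.comp (-X)) rfl hQ0
    (fun s hs => by simpa using hTneg s hs)).functional_nonneg hm hm2 hpos S hS hSpos hQd
  simpa using this

lemma dual {h : ℝ → ℝ} (hm : ∀ n, 0 < n → MonoAt h n) (hpos : ∀ x, 0 < x → 0 < h x)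
    (S : Finset ℝ) (hSpos : ∀ x ∈ S, 0 < x)
    (c : ℝ → ℝ) (hc : ∀ s, 0 < s → 0 ≤ ∑ x ∈ S, c x * (x / (s + x))) :
    0 ≤ ∑ x ∈ S, c x * h x := by
  rcases Nat.even_or_odd' S.card with ⟨m, hS | hS⟩
  · -- make the number of points odd by a point of weight zero
    obtain ⟨t, ht0, htS⟩ : ∃ t : ℝ, 0 < t ∧ t ∉ S :=
      ((Set.Ioi_infinite (0 : ℝ)).exists_notMem_finset S)
    have hsum : ∀ f : ℝ → ℝ, ∑ x ∈ insert t S, (if x ∈ S then c x else 0) * f x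
        = ∑ x ∈ S, c x * f x := fun f => by
      rw [Finset.sum_insert htS, if_neg htS, zero_mul, zero_add]
      exact Finset.sum_congr rfl fun x hx => by rw [if_pos hx]
    have := dual_odd (m := m) (hm _ m.succ_pos) (hm 2 two_pos) hpos (insert t S)
      (by rw [Finset.card_insert_of_notMem htS, hS])
      (fun x hx => by
        rcases Finset.mem_insert.mp hx with rfl | hx
        · exact ht0
        · exact hSpos x hx)
      (fun x => if x ∈ S then c x else 0)
      (fun s hs => by rw [hsum fun x => x / (s + x)]; exact hc s hs)
    rwa [hsum] at this
  · exact dual_odd (hm _ m.succ_pos) (hm 2 two_pos) hpos S hS hSpos c hc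

/-! ### The representing measure -/

lemma kernel_den_pos (x : Set.Ioi (0 : ℝ)) (τ : unitInterval) :
    0 < (1 - (τ : ℝ)) + τ * x := by
  have hx : (0 : ℝ) < x := x.2
  rcases eq_or_lt_of_le τ.2.1 with h0 | h0
  · rw [← h0]; norm_num
  · have := mul_pos h0 hx
    linarith [τ.2.2]

open CompactlySupported in
/-- The kernel `(1 + t) x / (1 + t x)` in the variable `τ = t / (1 + t)`, which makes it
continuous on the compactification `[0, 1]` of `[0, ∞)`. -/
noncomputable def kernel (x : Set.Ioi (0 : ℝ)) : C_c(unitInterval, ℝ) where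
  toFun τ := x / ((1 - (τ : ℝ)) + τ * x)
  continuous_toFun := by
    refine Continuous.div (by fun_prop) (by fun_prop) fun τ => (kernel_den_pos x τ).ne'
  hasCompactSupport' := HasCompactSupport.of_compactSpace _

open CompactlySupported in
/-- The cone of pointwise nonnegative functions on `[0, 1]`. -/
def nonnegCone : PointedCone ℝ (C_c(unitInterval, ℝ)) where
  carrier := {f | ∀ τ, 0 ≤ f τ}
  add_mem' ha hb τ := add_nonneg (ha τ) (hb τ)
  zero_mem' _ := le_rfl
  smul_mem' c _ hf τ := mul_nonneg c.2 (hf τ)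

open CompactlySupported in
/-- By `dual`, `kernel x ↦ h x` is a well defined positive functional on the span of the kernels;
the M. Riesz extension theorem and the Riesz–Markov–Kakutani theorem then produce the measure. -/
lemma exists_measure {h : ℝ → ℝ} (hm : ∀ n, 0 < n → MonoAt h n)
    (hpos : ∀ x, 0 < x → 0 < h x) :
    ∃ μ : Measure unitInterval, IsFiniteMeasure μ ∧
      ∀ x : Set.Ioi (0 : ℝ), h x = ∫ τ, kernel x τ ∂μ := by
  let Φ : (Set.Ioi (0 : ℝ) →₀ ℝ) →ₗ[ℝ] C_c(unitInterval, ℝ) :=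
    Finsupp.linearCombination ℝ kernel
  let H : (Set.Ioi (0 : ℝ) →₀ ℝ) →ₗ[ℝ] ℝ :=
    Finsupp.linearCombination ℝ fun x : Set.Ioi (0 : ℝ) => h x
  have hΦ : ∀ c τ, Φ c τ = ∑ x ∈ c.support, c x * kernel x τ := fun c τ => by
    simp only [Φ, Finsupp.linearCombination_apply, Finsupp.sum]
    rw [CompactlySupportedContinuousMap.coe_sum, Finset.sum_apply]
    rfl
  have hnn : ∀ c, (∀ τ, 0 ≤ Φ c τ) → 0 ≤ H c := fun c hc => by
    let c' : ℝ → ℝ := fun x => if hx : 0 < x then c ⟨x, hx⟩ else 0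
    have hc' : ∀ x : Set.Ioi (0 : ℝ), c' x = c x := fun x => dif_pos x.2
    have key := dual hm hpos (c.support.map (Function.Embedding.subtype _))
      (fun x hx => by
        obtain ⟨y, -, rfl⟩ := Finset.mem_map.mp hx
        exact y.2) c' (fun s hs => by
        -- the parameter `τ` at which the kernel is proportional to `x / (s + x)`
        have h1 := hc ⟨1 / (1 + s), by positivity, by rw [div_le_one (by positivity)]; linarith⟩
        rw [hΦ] at h1
        have h2 : ∑ x ∈ c.support.map (Function.Embedding.subtype _), c' x * (x / (s + x))
            = (∑ x ∈ c.support, c x * kernel x ⟨1 / (1 + s), by positivity,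
                by rw [div_le_one (by positivity)]; linarith⟩) / (1 + s) := by
          rw [Finset.sum_map, Finset.sum_div]
          refine Finset.sum_congr rfl fun x _ => ?_
          have hx : (0 : ℝ) < x := x.2
          simp only [Function.Embedding.subtype_apply]
          rw [hc']
          change _ = c x * (x / ((1 - 1 / (1 + s)) + 1 / (1 + s) * x)) / (1 + s)
          have a1 : (1 + s) ≠ 0 := by positivity
          have a2 : (1 - 1 / (1 + s)) + 1 / (1 + s) * (x : ℝ) = (s + x) / (1 + s) := by
            field_simp; ring
          rw [a2]
          have a3 : s + (x : ℝ) ≠ 0 := by positivity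
          field_simp
        rw [h2]
        exact div_nonneg h1 (by positivity))
    rw [Finset.sum_map] at key
    simp only [H, Finsupp.linearCombination_apply, Finsupp.sum, smul_eq_mul]
    simpa only [Function.Embedding.subtype_apply, hc'] using key
  have hker : LinearMap.ker Φ ≤ LinearMap.ker H := fun c hc => by
    rw [LinearMap.mem_ker] at hc ⊢
    refine le_antisymm ?_ (hnn c fun τ => by rw [hc]; rfl)
    have := hnn (-c) fun τ => by rw [map_neg, hc, neg_zero]; rfl
    rw [map_neg] at this
    linarith
  let f : C_c(unitInterval, ℝ) →ₗ.[ℝ] ℝ :=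
    { domain := LinearMap.range Φ
      toFun := (LinearMap.ker Φ).liftQ H hker ∘ₗ Φ.quotKerEquivRange.symm.toLinearMap }
  have hf : ∀ c, f ⟨Φ c, LinearMap.mem_range_self Φ c⟩ = H c := fun c => by
    change (LinearMap.ker Φ).liftQ H hker (Φ.quotKerEquivRange.symm ⟨Φ c, _⟩) = H c
    rw [LinearMap.quotKerEquivRange_symm_apply_image]
    simp
  obtain ⟨g, hg, hgpos⟩ := riesz_extension
    nonnegCone f
    (by
      rintro ⟨_, c, rfl⟩ hx
      rw [hf]
      exact hnn c fun τ => hx τ)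
    (by
      intro y
      obtain ⟨C, hC⟩ := isCompact_univ.exists_bound_of_continuousOn y.continuous.continuousOn
      refine ⟨⟨Φ (Finsupp.single ⟨1, Set.mem_Ioi.mpr one_pos⟩ C), LinearMap.mem_range_self Φ _⟩, ?_⟩
      intro τ
      have h1 : Φ (Finsupp.single ⟨1, Set.mem_Ioi.mpr one_pos⟩ C) τ = C := by
        simp only [Φ, Finsupp.linearCombination_single]
        change C * (1 / ((1 - (τ : ℝ)) + τ * 1)) = C
        rw [mul_one, sub_add_cancel, div_one, mul_one]
      change 0 ≤ Φ (Finsupp.single ⟨1, Set.mem_Ioi.mpr one_pos⟩ C) τ + y τ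
      rw [h1]
      have : |y τ| ≤ C := hC τ (Set.mem_univ τ)
      linarith [neg_abs_le (y τ)])
  let Λ : C_c(unitInterval, ℝ) →ₚ[ℝ] ℝ := PositiveLinearMap.mk₀ g fun x hx =>
    hgpos x fun τ => hx τ
  refine ⟨RealRMK.rieszMeasure Λ, inferInstance, fun x => ?_⟩
  rw [RealRMK.integral_rieszMeasure]
  change h x = g (kernel x)
  have h1 := hg ⟨Φ (Finsupp.single x 1), LinearMap.mem_range_self Φ _⟩
  rw [hf] at h1
  simpa [Φ, H] using h1.symm

/-- The point `τ = 1` contributes the constant `c`; the rest of the measure is transported back by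
`t = τ / (1 - τ)`. -/
lemma exists_repr {h : ℝ → ℝ} (hm : ∀ n, 0 < n → MonoAt h n) (hpos : ∀ x, 0 < x → 0 < h x) :
    ∃ c : ℝ, 0 ≤ c ∧ ∃ ρ : Measure ℝ, IsFiniteMeasure ρ ∧
      ∀ l : ℝ, 0 < l →
        h l = c + ∫ t in Set.Ici (0 : ℝ), ((1 + t) * l) / (1 + t * l) ∂ρ := by
  obtain ⟨μ, hμ, hrep⟩ := exists_measure hm hpos
  let g : unitInterval → ℝ := fun τ => (τ : ℝ) / (1 - τ)
  have hg : Measurable g := by fun_prop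
  refine ⟨μ.real {1}, measureReal_nonneg, (μ.restrict {1}ᶜ).map g, inferInstance, fun l hl => ?_⟩
  have hpre : g ⁻¹' Set.Ici 0 = Set.univ :=
    Set.eq_univ_of_forall fun τ => div_nonneg τ.2.1 (sub_nonneg.mpr τ.2.2)
  have hint : Integrable (fun τ => kernel ⟨l, hl⟩ τ) μ :=
    (kernel ⟨l, hl⟩).continuous.integrable_of_hasCompactSupport
      (kernel ⟨l, hl⟩).hasCompactSupport
  rw [setIntegral_map measurableSet_Ici (Measurable.aestronglyMeasurable (by fun_prop)) hg.aemeasurable, hpre,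
    Measure.restrict_univ, hrep ⟨l, hl⟩,
    ← integral_add_compl (measurableSet_singleton (1 : unitInterval)) hint]
  congr 1
  · rw [integral_singleton]
    have : kernel ⟨l, hl⟩ 1 = 1 := by
      change l / ((1 - (1 : ℝ)) + 1 * l) = 1
      rw [sub_self, zero_add, one_mul, div_self hl.ne']
    rw [this, smul_eq_mul, mul_one]
  · refine setIntegral_congr_fun (measurableSet_singleton _).compl fun τ hτ => ?_
    have hτ1 : 1 - (τ : ℝ) ≠ 0 := fun h0 => hτ (Subtype.ext (by
      rw [Set.Icc.coe_one]; linarith))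
    have hd := (kernel_den_pos ⟨l, hl⟩ τ).ne'
    change l / ((1 - (τ : ℝ)) + τ * l) = (1 + (τ : ℝ) / (1 - τ)) * l / (1 + τ / (1 - τ) * l)
    simp only at hd
    have e1 : 1 + (τ : ℝ) / (1 - τ) = 1 / (1 - τ) := by field_simp; ring
    have e2 : 1 + (τ : ℝ) / (1 - τ) * l = (1 - τ + τ * l) / (1 - τ) := by field_simp
    rw [e1, e2]
    field_simp

/-! ### Functions of class `P'` are matrix monotone -/

lemma quadForm_eq {n : ℕ} (U : Matrix (Fin n) (Fin n) ℂ) (d : Fin n → ℝ) (x : Fin n → ℂ) :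
    star x ⬝ᵥ ((U * diagonal (fun i => (d i : ℂ)) * star U) *ᵥ x)
      = ((∑ i, d i * Complex.normSq ((star U *ᵥ x) i) : ℝ) : ℂ) := by
  rw [← mulVec_mulVec, ← mulVec_mulVec, dotProduct_mulVec]
  have h1 : star x ᵥ* U = star (star U *ᵥ x) := by
    rw [star_mulVec, star_eq_conjTranspose, conjTranspose_conjTranspose]
  rw [h1]
  simp only [dotProduct, mulVec_diagonal, Pi.star_apply, Complex.ofReal_sum, Complex.ofReal_mul,
    Complex.normSq_eq_conj_mul_self]
  exact Finset.sum_congr rfl fun i _ => by rw [← starRingEnd_apply]; ring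

/-- `λ / (1 + t λ) |y|²` is the minimum over `z` of the right hand side, attained at
`z = λ / (1 + t λ) y`. -/
lemma parallel_le {l t : ℝ} (hl : 0 < l) (ht : 0 ≤ t) (y z : ℂ) :
    l / (1 + t * l) * Complex.normSq y
      ≤ l * Complex.normSq (y - t * z) + t * Complex.normSq z := by
  have h1 : 0 < 1 + t * l := by positivity
  rw [div_mul_eq_mul_div, div_le_iff₀ h1]
  simp only [Complex.normSq_apply, Complex.sub_re, Complex.sub_im, Complex.mul_re, Complex.mul_im,
    Complex.ofReal_re, Complex.ofReal_im, zero_mul, sub_zero, add_zero]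
  nlinarith [mul_nonneg ht (sq_nonneg (l * y.re - (1 + t * l) * z.re)),
    mul_nonneg ht (sq_nonneg (l * y.im - (1 + t * l) * z.im))]

lemma exists_diagonalization {n : ℕ} {A : Matrix (Fin n) (Fin n) ℂ} (hA : A.PosDef) :
    ∃ (U : Matrix (Fin n) (Fin n) ℂ) (d : Fin n → ℝ), U * star U = 1 ∧ (∀ i, 0 < d i) ∧
      A = U * diagonal (fun i => (d i : ℂ)) * star U := by
  refine ⟨hA.isHermitian.eigenvectorUnitary, hA.isHermitian.eigenvalues,
    Unitary.mul_star_self_of_mem hA.isHermitian.eigenvectorUnitary.2, hA.eigenvalues_pos, ?_⟩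
  have := hA.isHermitian.spectral_theorem
  rw [Unitary.conjStarAlgAut_apply] at this
  simpa [Function.comp_def] using this

lemma sum_normSq_eq {n : ℕ} {U : Matrix (Fin n) (Fin n) ℂ} (hU : U * star U = 1)
    (x : Fin n → ℂ) :
    ((∑ i, Complex.normSq ((star U *ᵥ x) i) : ℝ) : ℂ) = star x ⬝ᵥ x := by
  have := quadForm_eq U (fun _ => 1) x
  simp only [Complex.ofReal_one, diagonal_one, Matrix.mul_one, hU, one_mulVec, one_mul] at this
  exact this.symm

/-- The functions `λ ↦ λ / (1 + t λ)` are matrix monotone, by the variational formula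
`parallel_le`, whose right hand side is monotone in the matrix. -/
lemma kernel_mono {n : ℕ} {A B U V : Matrix (Fin n) (Fin n) ℂ} {d e : Fin n → ℝ}
    (hAB : LoewnerLE A B) (hU : U * star U = 1) (hV : V * star V = 1)
    (hA : A = U * diagonal (fun i => (d i : ℂ)) * star U)
    (hB : B = V * diagonal (fun i => (e i : ℂ)) * star V)
    (hd : ∀ i, 0 < d i) (he : ∀ i, 0 < e i) {t : ℝ} (ht : 0 ≤ t) (x : Fin n → ℂ) :
    ∑ i, d i / (1 + t * d i) * Complex.normSq ((star U *ᵥ x) i)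
      ≤ ∑ i, e i / (1 + t * e i) * Complex.normSq ((star V *ᵥ x) i) := by
  have hV' : star V * V = 1 := mul_eq_one_comm.mp hV
  let y : Fin n → ℂ := fun i => ((e i / (1 + t * e i) : ℝ) : ℂ) * (star V *ᵥ x) i
  let z : Fin n → ℂ := V *ᵥ y
  have hVz : star V *ᵥ z = y := by rw [mulVec_mulVec, hV', one_mulVec]
  have hsub : ∀ W : Matrix (Fin n) (Fin n) ℂ, ∀ i,
      (star W *ᵥ (x - (t : ℂ) • z)) i = (star W *ᵥ x) i - t * (star W *ᵥ z) i := fun W i => by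
    rw [mulVec_sub, mulVec_smul]; rfl
  have h1 : ∑ i, d i / (1 + t * d i) * Complex.normSq ((star U *ᵥ x) i)
      ≤ ∑ i, d i * Complex.normSq ((star U *ᵥ (x - (t : ℂ) • z)) i)
        + t * ∑ i, Complex.normSq ((star U *ᵥ z) i) := by
    rw [Finset.mul_sum, ← Finset.sum_add_distrib]
    refine Finset.sum_le_sum fun i _ => ?_
    rw [hsub]
    exact parallel_le (hd i) ht _ _
  have h2 : ∑ i, d i * Complex.normSq ((star U *ᵥ (x - (t : ℂ) • z)) i)
      ≤ ∑ i, e i * Complex.normSq ((star V *ᵥ (x - (t : ℂ) • z)) i) := by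
    have := PosSemidef.dotProduct_mulVec_nonneg hAB (x - (t : ℂ) • z)
    rw [sub_mulVec, dotProduct_sub, hA, hB, quadForm_eq, quadForm_eq, ← Complex.ofReal_sub,
      Complex.zero_le_real] at this
    linarith
  have h3 : ∑ i, Complex.normSq ((star U *ᵥ z) i) = ∑ i, Complex.normSq ((star V *ᵥ z) i) :=
    Complex.ofReal_injective (by rw [sum_normSq_eq hU, sum_normSq_eq hV])
  have h4 : ∑ i, e i * Complex.normSq ((star V *ᵥ (x - (t : ℂ) • z)) i)
        + t * ∑ i, Complex.normSq ((star V *ᵥ z) i)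
      = ∑ i, e i / (1 + t * e i) * Complex.normSq ((star V *ᵥ x) i) := by
    rw [Finset.mul_sum, ← Finset.sum_add_distrib]
    refine Finset.sum_congr rfl fun i _ => ?_
    have hpos : 1 + t * e i ≠ 0 := by have := he i; positivity
    rw [hsub, hVz]
    simp only [y]
    set w := (star V *ᵥ x) i
    have e1 : w - t * (((e i / (1 + t * e i) : ℝ) : ℂ) * w)
        = ((1 / (1 + t * e i) : ℝ) : ℂ) * w := by
      have : (1 / (1 + t * e i) : ℝ) = 1 - t * (e i / (1 + t * e i)) := by field_simp; ring
      rw [this]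
      push_cast
      ring
    rw [e1, Complex.normSq_mul, Complex.normSq_mul, Complex.normSq_ofReal, Complex.normSq_ofReal]
    field_simp
  rw [h3] at h1
  linarith

/-- Integrating `kernel_mono` against `ρ`. -/
lemma monoAt_of_repr {h : ℝ → ℝ} {c : ℝ} {ρ : Measure ℝ} [IsFiniteMeasure ρ]
    (hrep : ∀ l : ℝ, 0 < l →
      h l = c + ∫ t in Set.Ici (0 : ℝ), ((1 + t) * l) / (1 + t * l) ∂ρ) (n : ℕ) :
    MonoAt h n := by
  intro A B hA hB hAB
  obtain ⟨U, d, hU, hd, hAU⟩ := exists_diagonalization hA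
  obtain ⟨V, e, hV, he, hBV⟩ := exists_diagonalization hB
  have hherm : ∀ (W : Matrix (Fin n) (Fin n) ℂ) (f : Fin n → ℝ),
      (W * diagonal (fun i => (f i : ℂ)) * star W).IsHermitian := fun W f =>
    isHermitian_mul_mul_conjTranspose W (by
      rw [Matrix.IsHermitian, diagonal_conjTranspose]
      congr 1
      ext i
      simp)
  rw [LoewnerLE, matFunCalc_eq h A U hU d hAU, matFunCalc_eq h B V hV e hBV]
  refine PosSemidef.of_dotProduct_mulVec_nonneg ((hherm V _).sub (hherm U _)) fun x => ?_
  rw [sub_mulVec, dotProduct_sub, quadForm_eq V (fun i => h (e i)),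
    quadForm_eq U (fun i => h (d i)), ← Complex.ofReal_sub, Complex.zero_le_real, sub_nonneg]
  have hint : ∀ l, 0 < l → Integrable (fun t : ℝ => ((1 + t) * l) / (1 + t * l))
      (ρ.restrict (Set.Ici 0)) := fun l hl => by
    refine Integrable.of_bound (C := 1 + l) (Measurable.aestronglyMeasurable (by fun_prop)) ?_
    filter_upwards [ae_restrict_mem measurableSet_Ici] with t ht
    have ht0 : (0 : ℝ) ≤ t := ht
    rw [Real.norm_eq_abs, abs_of_nonneg (by positivity), div_le_iff₀ (by positivity)]
    nlinarith [mul_nonneg ht0 hl.le, mul_nonneg (mul_nonneg ht0 hl.le) hl.le]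
  have hexp : ∀ (f w : Fin n → ℝ), (∀ i, 0 < f i) → ∑ i, h (f i) * w i
      = c * ∑ i, w i + ∫ t in Set.Ici (0 : ℝ),
        (1 + t) * ∑ i, f i / (1 + t * f i) * w i ∂ρ := fun f w hf => by
    have h1 : ∀ t : ℝ, (1 + t) * ∑ i, f i / (1 + t * f i) * w i
        = ∑ i, ((1 + t) * f i) / (1 + t * f i) * w i := fun t => by
      rw [Finset.mul_sum]
      exact Finset.sum_congr rfl fun i _ => by ring
    simp_rw [h1]
    rw [integral_finsetSum _ fun i _ => (hint _ (hf i)).mul_const _, Finset.mul_sum,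
      ← Finset.sum_add_distrib]
    exact Finset.sum_congr rfl fun i _ => by rw [hrep _ (hf i), integral_mul_const, add_mul]
  have hint2 : ∀ (f w : Fin n → ℝ), (∀ i, 0 < f i) → Integrable
      (fun t : ℝ => (1 + t) * ∑ i, f i / (1 + t * f i) * w i) (ρ.restrict (Set.Ici 0)) :=
    fun f w hf => by
      refine (integrable_finsetSum Finset.univ
        fun i _ => (hint _ (hf i)).mul_const (w i)).congr (.of_forall fun t => ?_)
      simp only [Finset.mul_sum]
      exact Finset.sum_congr rfl fun i _ => by ring
  have hx : ∑ i, Complex.normSq ((star U *ᵥ x) i) = ∑ i, Complex.normSq ((star V *ᵥ x) i) :=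
    Complex.ofReal_injective (by rw [sum_normSq_eq hU, sum_normSq_eq hV])
  rw [hexp d _ hd, hexp e _ he, hx]
  refine add_le_add le_rfl (setIntegral_mono_on (hint2 d _ hd) (hint2 e _ he) measurableSet_Ici
    fun t ht => ?_)
  have ht0 : (0 : ℝ) ≤ t := ht
  exact mul_le_mul_of_nonneg_left (kernel_mono hAB hU hV hAU hBV hd he ht0 x) (by positivity)

/-- Löwner's theorem, `⋂ₙ P'ₙ = P'`: a positive function on
`(0,∞)` is matrix monotone of every order iff it is of class `P'`. -/
theorem loewner_theorem (h : ℝ → ℝ) (hpos : ∀ x : ℝ, 0 < x → 0 < h x) :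
    (∀ n : ℕ, 0 < n → ∀ A₁ A₂ : Matrix (Fin n) (Fin n) ℂ, A₁.PosDef → A₂.PosDef →
      LoewnerLE A₁ A₂ → LoewnerLE (matFunCalc h A₁) (matFunCalc h A₂))
    ↔ ∃ c : ℝ, 0 ≤ c ∧ ∃ ρ : Measure ℝ, IsFiniteMeasure ρ ∧
        ∀ l : ℝ, 0 < l →
          h l = c + ∫ t in Set.Ici (0 : ℝ), ((1 + t) * l) / (1 + t * l) ∂ρ := by
  constructor
  · intro hm
    exact exists_repr hm hpos
  · rintro ⟨c, -, ρ, hρ, hrep⟩ n -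
    exact monoAt_of_repr hrep n
end
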